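/- arXiv:2403.03696 — 7 statements merged into one kernel-verified Lean document; each statement's English description precedes it below -/
import Mathlib

section
/- For every forest F there exist two spanning subgraphs F^even and F^odd of F whose edge sets partition the edge set of F and such that every connected component of F^even and every connected component of F^odd is a star. -/
/-!
Root every component of the forest `F` and let `depth v` be the distance from `v` to the root of
its component. The two ends of an edge have depths differing by exactly one, and every vertex has
at most one neighbour of smaller depth, its parent. Colour each edge by the parity of the smaller
depth of its two ends; the two colour classes are the required subgraphs.

In the class of parity `b`, a vertex whose depth has parity `b` is joined only to its children,
and any other vertex only to its parent. Sending a vertex of the first kind to itself and one of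
the second kind to its neighbour, if it has one, therefore gives a map that is constant along
edges and moves each vertex to itself or to a neighbour. By `componentsAreStars_of_center` such
a map picks out the star centres.
-/


/-- A star: a tree containing a vertex adjacent to all other vertices
(this includes the one-vertex tree and the single edge). -/
def IsStar {V : Type*} (G : SimpleGraph V) : Prop :=
  G.IsTree ∧ ∃ c, ∀ v, v ≠ c → G.Adj c v

/-- Every connected component of `G` (as an induced subgraph) is a star. -/
def ComponentsAreStars {V : Type*} (G : SimpleGraph V) : Prop :=
  ∀ c : G.ConnectedComponent, IsStar (G.induce c.supp)

/-- The depth of `v` in `G`: its distance to a root chosen in its connected component. -/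
noncomputable def depth {V : Type*} (G : SimpleGraph V) (v : V) : ℕ :=
  G.dist (G.connectedComponentMk v).out v

lemma reachable_root {V : Type*} (G : SimpleGraph V) (v : V) :
    G.Reachable (G.connectedComponentMk v).out v :=
  SimpleGraph.ConnectedComponent.exact (Quot.out_eq _)

lemma root_eq {V : Type*} {G : SimpleGraph V} {u v : V} (h : G.Adj u v) :
    (G.connectedComponentMk u).out = (G.connectedComponentMk v).out := by
  rw [SimpleGraph.ConnectedComponent.sound h.reachable]

lemma depth_adj {V : Type*} {G : SimpleGraph V} (hG : G.IsAcyclic) {u v : V} (h : G.Adj u v) :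
    depth G u = depth G v + 1 ∨ depth G v = depth G u + 1 := by
  unfold depth
  rw [← root_eq h]
  exact hG.dist_eq_dist_add_one_of_adj_of_reachable _ h (reachable_root G u)

/-- In a forest, a vertex has at most one neighbour of smaller depth: it must be the penultimate
vertex of the path from the root. -/
lemma parent_unique {V : Type*} {G : SimpleGraph V} (hG : G.IsAcyclic) {u u' v : V}
    (h : G.Adj u v) (h' : G.Adj u' v) (hd : depth G v = depth G u + 1)
    (hd' : depth G v = depth G u' + 1) : u = u' := by
  obtain ⟨p, hp, hpl⟩ := (reachable_root G v).exists_path_of_dist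
  have key : ∀ w, G.Adj w v → depth G v = depth G w + 1 → w = p.penultimate := by
    intro w hw hdw
    have hr := reachable_root G w
    unfold depth at hdw
    rw [root_eq hw] at hr hdw
    obtain ⟨q, hq, hql⟩ := hr.exists_path_of_dist
    have hv : v ∉ q.support := by
      intro hv
      have := congrArg SimpleGraph.Walk.length (hG.path_concat hp hq hw.symm hv)
      rw [SimpleGraph.Walk.length_concat] at this
      omega
    exact hG.eq_penultimate_of_adj_end hp hw.symm
      (hG.mem_support_of_ne_mem_support_of_adj_of_isPath hp hq hw.symm hv)
  rw [key u h hd, key u' h' hd']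

/-- An acyclic graph consists of stars as soon as some map `f`, constant along edges, moves every
vertex to itself or to a neighbour; the values of `f` are then the centres. -/
lemma componentsAreStars_of_center {V : Type*} {H : SimpleGraph V} (hH : H.IsAcyclic) (f : V → V)
    (h1 : ∀ v, f v = v ∨ H.Adj (f v) v) (h2 : ∀ u v, H.Adj u v → f u = f v) :
    ComponentsAreStars H := by
  intro c
  refine ⟨hH.isTree_connectedComponent c, ?_⟩
  induction c using SimpleGraph.ConnectedComponent.ind with
  | h v =>
    have hreach : ∀ w, H.Reachable w v → f w = f v := by
      rintro w ⟨p⟩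
      induction p with
      | nil => rfl
      | cons h _ ih => exact (h2 _ _ h).trans ih
    have hmem : f v ∈ (H.connectedComponentMk v).supp := by
      rw [SimpleGraph.ConnectedComponent.mem_supp_iff]
      apply SimpleGraph.ConnectedComponent.sound
      rcases h1 v with h | h
      · rw [h]
      · exact h.reachable
    refine ⟨⟨f v, hmem⟩, ?_⟩
    rintro ⟨w, hw⟩ hne
    have hfw := hreach w (SimpleGraph.ConnectedComponent.exact hw)
    rcases h1 w with h | h
    · exact absurd (Subtype.ext (h.symm.trans hfw)) hne
    · rw [hfw] at h
      exact h

/-- The edges of `G` whose end of smaller depth has depth of parity `b`. -/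
noncomputable def layer {V : Type*} (G : SimpleGraph V) (b : ℕ) : SimpleGraph V where
  Adj u v := G.Adj u v ∧ min (depth G u) (depth G v) % 2 = b
  symm := ⟨fun _ _ h => ⟨h.1.symm, by rw [min_comm]; exact h.2⟩⟩
  loopless := ⟨fun _ h => h.1.ne rfl⟩

lemma layer_le {V : Type*} (G : SimpleGraph V) (b : ℕ) : layer G b ≤ G := fun _ _ h => h.1

lemma layer_stars {V : Type*} {G : SimpleGraph V} (hG : G.IsAcyclic) (b : ℕ) :
    ComponentsAreStars (layer G b) := by
  classical
  let f : V → V := fun v =>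
    if depth G v % 2 = b then v
    else if h : ∃ u, (layer G b).Adj u v then h.choose else v
  have key : ∀ u v, (layer G b).Adj u v → depth G v = depth G u + 1 → f u = f v := by
    intro u v h hd
    have hu : depth G u % 2 = b := by have := h.2; rwa [min_eq_left (by omega)] at this
    have hv : ¬ depth G v % 2 = b := by omega
    have hex : ∃ u, (layer G b).Adj u v := ⟨u, h⟩
    have hfv : f v = hex.choose := by simp only [f, if_neg hv, dif_pos hex]
    have hfu : f u = u := if_pos hu
    have hc := hex.choose_spec
    rw [hfu, hfv]
    refine parent_unique hG h.1 hc.1 hd ?_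
    -- Otherwise `v` is the end of smaller depth, whose parity is not `b`.
    rcases depth_adj hG hc.1 with h3 | h3
    · have := hc.2
      rw [min_eq_right (by omega)] at this
      exact absurd this hv
    · exact h3
  refine componentsAreStars_of_center (hG.anti (layer_le G b)) f ?_ ?_
  · intro v
    by_cases hv : depth G v % 2 = b
    · exact Or.inl (if_pos hv)
    · by_cases hex : ∃ u, (layer G b).Adj u v
      · right
        have hfv : f v = hex.choose := by simp only [f, if_neg hv, dif_pos hex]
        rw [hfv]
        exact hex.choose_spec
      · left
        simp only [f, if_neg hv, dif_neg hex]
  · intro u v h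
    rcases depth_adj hG h.1 with h3 | h3
    · exact (key v u h.symm h3).symm
    · exact key u v h h3

/-- For every forest `F` there are two spanning subgraphs `Fe` and `Fo` of `F` whose
edge sets partition the edge set of `F` and all of whose connected components are
stars. -/
theorem forest_star_decomposition {V : Type*} [Fintype V] (F : SimpleGraph V)
    (hF : F.IsAcyclic) :
    ∃ Fe Fo : SimpleGraph V, Fe ≤ F ∧ Fo ≤ F ∧
      Fe.edgeSet ∪ Fo.edgeSet = F.edgeSet ∧ Disjoint Fe.edgeSet Fo.edgeSet ∧
      ComponentsAreStars Fe ∧ ComponentsAreStars Fo := by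
  refine ⟨layer F 0, layer F 1, layer_le F 0, layer_le F 1, ?_, ?_,
    layer_stars hF 0, layer_stars hF 1⟩
  · rw [← SimpleGraph.edgeSet_sup]
    congr 1
    ext u v
    constructor
    · rintro (h | h)
      · exact h.1
      · exact h.1
    · intro h
      rcases Nat.mod_two_eq_zero_or_one (min (depth F u) (depth F v)) with h0 | h0
      · exact Or.inl ⟨h, h0⟩
      · exact Or.inr ⟨h, h0⟩
  · rw [Set.disjoint_left]
    intro e
    induction e using Sym2.ind with
    | h u v =>
      intro h0 h1
      have h0' := (show (layer F 0).Adj u v from h0).2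
      have h1' := (show (layer F 1).Adj u v from h1).2
      omega
end

section
/- Let m be a positive integer and let a_1,...,a_{3m} be positive integers such that A = (a_1+...+a_{3m})/m is an integer and A/4 < a_i < A/2 for every i. Let G be the disjoint union of 3m paths of orders a_1,...,a_{3m} and let H be the disjoint union of m paths each of order A. Then there exists a partition of {1,...,3m} into m sets I_1,...,I_m, each of exactly three elements, with ∑_{j∈I_i} a_j = A for every i, if and only if lcs(G,H) = m(G). -/
/-!
The edge count of every common subgraph is at most `m(G)`, and when it is attained the copy of the
common subgraph in `G` uses all edges of `G`.  Since that copy also lives on all vertices of `G`,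
`lcs G H = m(G)` says exactly that `G` itself embeds into `H` (`lcs_eq_card_edgeSet_iff`).

For the paths at hand, a partition into triples gives an embedding by laying the paths of each
triple one after another along a path of order `A`.  Conversely, an embedding of `G` sends each
path, being connected, into a single component of `H`.  As `G` and `H` both have `m * A` vertices,
the embedding is a bijection on vertices, so the paths sent to a given component have total order
exactly `A`; the bounds `A/4 < a i < A/2` then force there to be exactly three of them.
-/

/-- A graph `H` is a common subgraph of `G₁` and `G₂` if it is isomorphic to a subgraph
of `G₁` and to a subgraph of `G₂`, i.e. it embeds (as a not necessarily induced
subgraph) into both. -/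
def IsCommonSubgraph {U V₁ V₂ : Type*} (H : SimpleGraph U)
    (G₁ : SimpleGraph V₁) (G₂ : SimpleGraph V₂) : Prop :=
  (∃ f : U → V₁, Function.Injective f ∧ ∀ a b, H.Adj a b → G₁.Adj (f a) (f b)) ∧
  (∃ g : U → V₂, Function.Injective g ∧ ∀ a b, H.Adj a b → G₂.Adj (g a) (g b))

/-- `lcs G₁ G₂` is the largest number of edges of a common subgraph of `G₁` and `G₂`. -/
noncomputable def lcs {V₁ V₂ : Type*} [Fintype V₁] [Fintype V₂]
    (G₁ : SimpleGraph V₁) (G₂ : SimpleGraph V₂) : ℕ :=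
  sSup { k | ∃ H : SimpleGraph V₁, IsCommonSubgraph H G₁ G₂ ∧ Nat.card H.edgeSet = k }

/-- The disjoint union of a family of graphs. -/
def sigmaGraph {ι : Type*} {V : ι → Type*} (G : ∀ i, SimpleGraph (V i)) :
    SimpleGraph (Σ i, V i) :=
  SimpleGraph.fromRel (fun u v => ∃ h : u.1 = v.1, (G v.1).Adj (h ▸ u.2) v.2)

section SigmaGraph

variable {ι : Type*} {V : ι → Type*} {G : ∀ i, SimpleGraph (V i)}

lemma sigmaGraph_adj_mk {i : ι} {x y : V i} (h : (G i).Adj x y) :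
    (sigmaGraph G).Adj ⟨i, x⟩ ⟨i, y⟩ := by
  refine (SimpleGraph.fromRel_adj _ _ _).2 ⟨?_, Or.inl ⟨rfl, h⟩⟩
  intro he
  exact h.ne (eq_of_heq (Sigma.mk.inj he).2)

lemma sigmaGraph_adj_cases {u v : Σ i, V i} (h : (sigmaGraph G).Adj u v) :
    ∃ i, ∃ x y : V i, u = ⟨i, x⟩ ∧ v = ⟨i, y⟩ ∧ (G i).Adj x y := by
  obtain ⟨i, x⟩ := u
  obtain ⟨j, y⟩ := v
  obtain ⟨-, ⟨e, h⟩ | ⟨e, h⟩⟩ := (SimpleGraph.fromRel_adj _ _ _).1 h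
  · dsimp only at e
    subst e
    exact ⟨i, x, y, rfl, rfl, h⟩
  · dsimp only at e
    subst e
    exact ⟨j, x, y, rfl, rfl, h.symm⟩

end SigmaGraph

lemma card_edgeSet_le_of_injective {U V : Type*} [Fintype V] {H : SimpleGraph U}
    {G : SimpleGraph V} (f : H →g G) (hf : Function.Injective f) :
    Nat.card H.edgeSet ≤ Nat.card G.edgeSet :=
  Nat.card_le_card_of_injective _ (SimpleGraph.Hom.mapEdgeSet.injective f hf)

/-- An injective homomorphism between graphs with equally many edges reflects adjacency. -/
lemma adj_of_card_edgeSet_eq {U V : Type*} [Fintype U] [Fintype V] {H : SimpleGraph U}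
    {G : SimpleGraph V} (f : H →g G) (hf : Function.Injective f)
    (hc : Nat.card H.edgeSet = Nat.card G.edgeSet) {x y : U} (h : G.Adj (f x) (f y)) :
    H.Adj x y := by
  have hb : Function.Bijective f.mapEdgeSet :=
    (SimpleGraph.Hom.mapEdgeSet.injective f hf).bijective_of_nat_card_le hc.ge
  obtain ⟨⟨e, he⟩, hee⟩ := hb.2 ⟨s(f x, f y), h⟩
  have h1 : Sym2.map f e = Sym2.map f s(x, y) := congrArg Subtype.val hee
  rw [Sym2.map.injective hf h1] at he
  exact he

/-- Provided that `V₁` injects into `V₂`, which makes the edgeless graph a common subgraph,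
`lcs G₁ G₂ = m(G₁)` holds precisely when `G₁` is isomorphic to a subgraph of `G₂`. -/
lemma lcs_eq_card_edgeSet_iff {V₁ V₂ : Type*} [Fintype V₁] [Fintype V₂]
    (G₁ : SimpleGraph V₁) (G₂ : SimpleGraph V₂) (f₀ : V₁ → V₂) (hf₀ : Function.Injective f₀) :
    lcs G₁ G₂ = Nat.card G₁.edgeSet ↔
      ∃ f : V₁ → V₂, Function.Injective f ∧ ∀ x y, G₁.Adj x y → G₂.Adj (f x) (f y) := by
  set S := { k | ∃ H : SimpleGraph V₁, IsCommonSubgraph H G₁ G₂ ∧ Nat.card H.edgeSet = k } with hS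
  have hle : ∀ k ∈ S, k ≤ Nat.card G₁.edgeSet := by
    rintro k ⟨H, ⟨⟨f, hf, hfa⟩, -⟩, rfl⟩
    exact card_edgeSet_le_of_injective (⟨f, fun {x y} h => hfa x y h⟩ : H →g G₁) hf
  constructor
  · intro h
    have hne : S.Nonempty :=
      ⟨_, ⊥, ⟨⟨id, Function.injective_id, by simp⟩, ⟨f₀, hf₀, by simp⟩⟩, rfl⟩
    have hmem : lcs G₁ G₂ ∈ S := Nat.sSup_mem hne ⟨_, hle⟩
    rw [h] at hmem
    obtain ⟨H, ⟨⟨f, hf, hfa⟩, ⟨g, hg, hga⟩⟩, hc⟩ := hmem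
    have hbij : Function.Bijective f := Finite.injective_iff_bijective.1 hf
    let e := Equiv.ofBijective f hbij
    refine ⟨g ∘ e.symm, hg.comp e.symm.injective, fun x y hxy => hga _ _ ?_⟩
    refine adj_of_card_edgeSet_eq (⟨f, fun {x y} h => hfa x y h⟩ : H →g G₁) hf hc ?_
    change G₁.Adj (e (e.symm x)) (e (e.symm y))
    simpa using hxy
  · rintro ⟨f, hf, hfa⟩
    have hmem : Nat.card G₁.edgeSet ∈ S :=
      ⟨G₁, ⟨⟨id, Function.injective_id, fun _ _ h => h⟩, ⟨f, hf, hfa⟩⟩, rfl⟩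
    exact le_antisymm (csSup_le ⟨_, hmem⟩ hle) (le_csSup ⟨_, hle⟩ hmem)

/-- Paths of orders `a i` can be laid one after another, in the order of their indices, along the
paths of order `A` to which `I` assigns them, as long as they fit. -/
lemma exists_embedding_of_sum_le {n m A : ℕ} (a : Fin n → ℕ) (I : Fin n → Fin m)
    (hI : ∀ j, ∑ i ∈ Finset.univ.filter (fun i => I i = j), a i ≤ A) :
    ∃ f : (Σ i, Fin (a i)) → (Σ _ : Fin m, Fin A), Function.Injective f ∧
      ∀ x y, (sigmaGraph fun i => SimpleGraph.pathGraph (a i)).Adj x y →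
        (sigmaGraph fun _ : Fin m => SimpleGraph.pathGraph A).Adj (f x) (f y) := by
  -- `off i` is the total order of the paths placed before the `i`-th one in its component.
  let off : Fin n → ℕ := fun i => ∑ k ∈ Finset.univ.filter (fun k => I k = I i ∧ k < i), a k
  have hins : ∀ i, off i + a i =
      ∑ k ∈ insert i (Finset.univ.filter (fun k => I k = I i ∧ k < i)), a k := by
    intro i
    rw [Finset.sum_insert (by simp), add_comm]
  have hA : ∀ i, off i + a i ≤ A := by
    intro i
    rw [hins]
    refine (Finset.sum_le_sum_of_subset ?_).trans (hI (I i))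
    intro k
    simp only [Finset.mem_insert, Finset.mem_filter, Finset.mem_univ, true_and]
    rintro (rfl | h)
    exacts [rfl, h.1]
  have hlt : ∀ i k, I i = I k → i < k → off i + a i ≤ off k := by
    intro i k hik hlt
    rw [hins]
    refine Finset.sum_le_sum_of_subset ?_
    intro l
    simp only [Finset.mem_insert, Finset.mem_filter, Finset.mem_univ, true_and]
    rintro (rfl | h)
    exacts [⟨hik, hlt⟩, ⟨h.1.trans hik, h.2.trans hlt⟩]
  refine ⟨fun x => ⟨I x.1, ⟨off x.1 + x.2, by have := hA x.1; have := x.2.2; omega⟩⟩, ?_, ?_⟩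
  · rintro ⟨i, x⟩ ⟨k, y⟩ h
    have h1 : I i = I k := congrArg Sigma.fst h
    have h2 : off i + x = off k + y := congrArg (fun z => (z.2 : ℕ)) h
    have hx := x.2
    have hy := y.2
    rcases lt_trichotomy i k with hik | rfl | hik
    · have := hlt i k h1 hik
      omega
    · have : x = y := Fin.ext (by omega)
      rw [this]
    · have := hlt k i h1.symm hik
      omega
  · intro u v h
    obtain ⟨i, x, y, rfl, rfl, hxy⟩ := sigmaGraph_adj_cases h
    refine sigmaGraph_adj_mk (G := fun _ : Fin m => SimpleGraph.pathGraph A) ?_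
    rw [SimpleGraph.pathGraph_adj] at hxy ⊢
    dsimp only
    omega

/-- A homomorphism between disjoint unions of paths sends each path into a single component. -/
lemma fst_eq_of_hom {n m A : ℕ} {a : Fin n → ℕ} {f : (Σ i, Fin (a i)) → (Σ _ : Fin m, Fin A)}
    (hf : ∀ x y, (sigmaGraph fun i => SimpleGraph.pathGraph (a i)).Adj x y →
        (sigmaGraph fun _ : Fin m => SimpleGraph.pathGraph A).Adj (f x) (f y))
    (i : Fin n) (h0 : 0 < a i) (k : ℕ) (hk : k < a i) :
    (f ⟨i, ⟨k, hk⟩⟩).1 = (f ⟨i, ⟨0, h0⟩⟩).1 := by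
  induction k with
  | zero => rfl
  | succ k ih =>
    rw [← ih (by omega)]
    have hadj := hf ⟨i, ⟨k, by omega⟩⟩ ⟨i, ⟨k + 1, hk⟩⟩
      (sigmaGraph_adj_mk (G := fun i => SimpleGraph.pathGraph (a i))
        (SimpleGraph.pathGraph_adj.2 (Or.inl rfl)))
    obtain ⟨j, x, y, hx, hy, -⟩ := sigmaGraph_adj_cases hadj
    rw [hx, hy]

/-- If a bijection sends all of the `i`-th path into the component `I i`, then the paths sent to
any given component have total order `A`, by counting vertices. -/
lemma sum_fiber_eq {n m A : ℕ} {a : Fin n → ℕ} {f : (Σ i, Fin (a i)) → (Σ _ : Fin m, Fin A)}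
    (hf : Function.Bijective f) (I : Fin n → Fin m) (hI : ∀ x, (f x).1 = I x.1) (j : Fin m) :
    ∑ i ∈ Finset.univ.filter (fun i => I i = j), a i = A := by
  have h1 : (Finset.univ.filter fun x : Σ i, Fin (a i) => I x.1 = j).card =
      (Finset.univ.filter fun y : Σ _ : Fin m, Fin A => y.1 = j).card := by
    refine Finset.card_bijective f hf ?_
    intro x
    simp [hI]
  have h2 : (Finset.univ.filter fun x : Σ i, Fin (a i) => I x.1 = j) =
      (Finset.univ.filter fun i => I i = j).sigma fun _ => Finset.univ := by
    ext x; simp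
  have h3 : (Finset.univ.filter fun y : Σ _ : Fin m, Fin A => y.1 = j) =
      ({j} : Finset (Fin m)).sigma fun _ => Finset.univ := by
    ext x; simp
  rw [h2, h3, Finset.card_sigma, Finset.card_sigma] at h1
  simpa using h1

/-- Numbers strictly between `A/4` and `A/2` with sum `A` are three in number. -/
lemma card_eq_three_of_sum_eq {ι : Type*} (s : Finset ι) (a : ι → ℕ) {A : ℕ} (hA0 : 0 < A)
    (hA : ∑ i ∈ s, a i = A) (hlb : ∀ i, A < 4 * a i) (hub : ∀ i, 2 * a i < A) : s.card = 3 := by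
  have hne : s.Nonempty := by
    rw [Finset.nonempty_iff_ne_empty]
    rintro rfl
    simp at hA
    omega
  have h1 : s.card * A < 4 * A := by
    calc s.card * A = ∑ i ∈ s, A := by simp
      _ < ∑ i ∈ s, 4 * a i := Finset.sum_lt_sum_of_nonempty hne fun i _ => hlb i
      _ = 4 * A := by rw [← Finset.mul_sum, hA]
  have h2 : 2 * A < s.card * A := by
    calc 2 * A = ∑ i ∈ s, 2 * a i := by rw [← Finset.mul_sum, hA]
      _ < ∑ i ∈ s, A := Finset.sum_lt_sum_of_nonempty hne fun i _ => hub i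
      _ = s.card * A := by simp
  have h3 := lt_of_mul_lt_mul_right h1 (Nat.zero_le A)
  have h4 := lt_of_mul_lt_mul_right h2 (Nat.zero_le A)
  omega

/-- Let `a 1, …, a (3m)` be positive integers with average triple sum `A` (that is,
`∑ i, a i = m * A`) such that `A/4 < a i < A/2` for every `i`.  Let `G` be the disjoint
union of `3m` paths of orders `a 1, …, a (3m)` and let `H` be the disjoint union of `m`
paths of order `A` each.  Then `{1,…,3m}` admits a partition into `m` triples each
summing to `A` if and only if `lcs G H = m(G)`. -/
theorem three_partition_iff_lcs (m : ℕ) (hm : 0 < m) (a : Fin (3 * m) → ℕ)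
    (ha : ∀ i, 0 < a i) (A : ℕ) (hA : ∑ i, a i = m * A)
    (hlb : ∀ i, A < 4 * a i) (hub : ∀ i, 2 * a i < A) :
    (∃ I : Fin (3 * m) → Fin m,
        ∀ j, (Finset.univ.filter fun i => I i = j).card = 3 ∧
          ∑ i ∈ Finset.univ.filter (fun i => I i = j), a i = A) ↔
      lcs (sigmaGraph fun i => SimpleGraph.pathGraph (a i))
          (sigmaGraph fun _ : Fin m => SimpleGraph.pathGraph A) =
        Nat.card (sigmaGraph fun i => SimpleGraph.pathGraph (a i)).edgeSet := by
  have hcard : Fintype.card (Σ i, Fin (a i)) = Fintype.card (Σ _ : Fin m, Fin A) := by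
    simp [Fintype.card_sigma, hA]
  rw [lcs_eq_card_edgeSet_iff _ _ _ (Fintype.equivOfCardEq hcard).injective]
  constructor
  · rintro ⟨I, hI⟩
    exact exists_embedding_of_sum_le a I fun j => (hI j).2.le
  · rintro ⟨f, hf, hfa⟩
    have hbij : Function.Bijective f := (Fintype.bijective_iff_injective_and_card f).2 ⟨hf, hcard⟩
    let I : Fin (3 * m) → Fin m := fun i => (f ⟨i, ⟨0, ha i⟩⟩).1
    have hsum := sum_fiber_eq hbij I fun x => fst_eq_of_hom hfa x.1 (ha x.1) x.2 x.2.2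
    have hA0 : 0 < A := (Nat.zero_le _).trans_lt (hub ⟨0, by omega⟩)
    exact ⟨I, fun j => ⟨card_eq_three_of_sum_eq _ a hA0 (hsum j) hlb hub, hsum j⟩⟩
end

section
/- Let Δ be a positive integer and let F be a forest with m ≥ 1 edges. Then there exists a set E_0 of edges of F with |E_0| < 2m/Δ such that every connected component of the forest F − E_0, obtained from F by deleting the edges of E_0, contains at most one vertex of degree more than Δ. -/
/-!
Let `L` be the set of vertices of degree greater than `Δ` in `F`. Counting degrees gives
`|L| (Δ + 1) ≤ 2m`, hence `|L| < 2m / Δ` because `m ≥ 1`. Deleting edges does not increase degrees,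
so it is enough to separate the vertices of `L` from each other by deleting at most `|L|` edges.

`exists_card_le_separating` does this by induction on `L`. Suppose that the vertices of `L` have
been separated and a vertex `v` is added. The component of `v` contains at most one vertex `u` of
`L`. In a forest the first edge of the path from `v` to `u` is a bridge
(`exists_edge_separating`), so deleting it separates `v` from `u`, and hence from all of `L`.
-/

/-- In a forest, deleting the first edge of the path from `v` to `u` separates `v` from `u`. -/
lemma exists_edge_separating {V : Type*} {G : SimpleGraph V} (hG : G.IsAcyclic) {v u : V}
    (hne : v ≠ u) (h : G.Reachable v u) :
    ∃ e ∈ G.edgeSet, ¬ (G.deleteEdges {e}).Reachable v u := by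
  obtain ⟨p, hp⟩ := h.exists_isPath
  cases p with
  | nil => exact absurd rfl hne
  | @cons _ x _ hvx q =>
    rw [SimpleGraph.Walk.cons_isPath_iff] at hp
    refine ⟨s(v, x), hvx, fun hr => ?_⟩
    have hb := SimpleGraph.isAcyclic_iff_forall_isBridge.1 hG (e := s(v, x)) hvx
    -- The rest of the path avoids `v`, so it survives the deletion and joins `x` to `u`.
    have hq : (G.deleteEdges {s(v, x)}).Reachable x u :=
      (q.toDeleteEdge _ fun hh => hp.2 (q.fst_mem_support_of_mem_edges hh)).reachable
    exact SimpleGraph.isBridge_iff.1 hb (hr.trans hq.symm)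

/-- In a forest, the vertices of a finite set `L` can be pairwise separated by deleting at most
`|L|` edges. -/
lemma exists_card_le_separating {V : Type*} [DecidableEq V] {F : SimpleGraph V}
    (hF : F.IsAcyclic) (L : Finset V) :
    ∃ E : Finset (Sym2 V), (E : Set (Sym2 V)) ⊆ F.edgeSet ∧ E.card ≤ L.card ∧
      ∀ a ∈ L, ∀ b ∈ L, (F.deleteEdges (E : Set (Sym2 V))).Reachable a b → a = b := by
  induction L using Finset.induction_on with
  | empty => exact ⟨∅, by simp⟩
  | insert v L hv ih =>
    obtain ⟨E, hE, hcard, hsep⟩ := ih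
    by_cases hu : ∃ u ∈ L, (F.deleteEdges (E : Set (Sym2 V))).Reachable v u
    · obtain ⟨u, huL, hvu⟩ := hu
      have hle := F.deleteEdges_le (E : Set (Sym2 V))
      obtain ⟨e, he, hnr⟩ := exists_edge_separating (hF.anti hle)
        (by rintro rfl; exact hv huL) hvu
      rw [SimpleGraph.deleteEdges_deleteEdges] at hnr
      have hE' : ((insert e E : Finset (Sym2 V)) : Set (Sym2 V)) = (E : Set (Sym2 V)) ∪ {e} := by
        rw [Finset.coe_insert, Set.union_singleton]
      have hmono : F.deleteEdges ((E : Set (Sym2 V)) ∪ {e}) ≤ F.deleteEdges (E : Set (Sym2 V)) :=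
        SimpleGraph.deleteEdges_anti Set.subset_union_left
      -- A vertex of `L` still joined to `v` was joined to `u` before, so it equals `u`.
      have key : ∀ w ∈ L, ¬ (F.deleteEdges ((E : Set (Sym2 V)) ∪ {e})).Reachable v w := by
        intro w hw hvw
        have : w = u := hsep w hw u huL ((hvw.mono hmono).symm.trans hvu)
        exact hnr (this ▸ hvw)
      refine ⟨insert e E, ?_, ?_, ?_⟩
      · rw [hE']
        exact Set.union_subset hE (Set.singleton_subset_iff.2 (SimpleGraph.edgeSet_mono hle he))
      · rw [Finset.card_insert_of_notMem hv]
        exact (Finset.card_insert_le _ _).trans (by omega)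
      · rw [hE']
        intro a ha b hb hab
        rcases Finset.mem_insert.1 ha with rfl | haL <;>
          rcases Finset.mem_insert.1 hb with rfl | hbL
        · rfl
        · exact absurd hab (key b hbL)
        · exact absurd hab.symm (key a haL)
        · exact hsep a haL b hbL (hab.mono hmono)
    · push Not at hu
      refine ⟨E, hE, hcard.trans (Finset.card_le_card (Finset.subset_insert v L)), ?_⟩
      intro a ha b hb hab
      rcases Finset.mem_insert.1 ha with rfl | haL <;>
          rcases Finset.mem_insert.1 hb with rfl | hbL
      · rfl
      · exact absurd hab (hu b hbL)
      · exact absurd hab.symm (hu a haL)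
      · exact hsep a haL b hbL hab

/-- Let `Δ` be a positive integer and `F` a forest with `m ≥ 1` edges.  Then there is a
set `E₀` of edges of `F` with `|E₀| < 2m/Δ` such that every connected component of
`F − E₀` contains at most one vertex whose degree in `F − E₀` exceeds `Δ`. -/
theorem exists_edgeSet_highDegree_split {V : Type*} [Fintype V] (Δ : ℕ) (hΔ : 0 < Δ)
    (F : SimpleGraph V) (hF : F.IsAcyclic) (hm : 1 ≤ Nat.card F.edgeSet) :
    ∃ E₀ ⊆ F.edgeSet, (Nat.card E₀ : ℚ) < 2 * Nat.card F.edgeSet / Δ ∧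
      ∀ c : (F.deleteEdges E₀).ConnectedComponent,
        {v : V | v ∈ c.supp ∧
          Δ < Nat.card ((F.deleteEdges E₀).neighborSet v)}.Subsingleton := by
  classical
  set L : Finset V := Finset.univ.filter fun v => Δ < F.degree v with hL
  obtain ⟨E, hE, hcard, hsep⟩ := exists_card_le_separating hF L
  have hsum : L.card * (Δ + 1) ≤ 2 * Nat.card F.edgeSet := by
    calc L.card * (Δ + 1) ≤ ∑ v ∈ L, F.degree v := by
          rw [← smul_eq_mul]
          exact Finset.card_nsmul_le_sum _ _ _ fun v hv => (Finset.mem_filter.1 hv).2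
      _ ≤ ∑ v, F.degree v := Finset.sum_le_sum_of_subset (Finset.subset_univ _)
      _ = 2 * Nat.card F.edgeSet := by
          rw [F.sum_degrees_eq_twice_card_edges, Nat.card_eq_fintype_card,
            SimpleGraph.edgeFinset_card]
  refine ⟨E, hE, ?_, ?_⟩
  · have hlt : E.card * Δ < 2 * Nat.card F.edgeSet := by
      have h1 : E.card * Δ ≤ L.card * Δ := Nat.mul_le_mul_right _ hcard
      -- Strictness comes from the summand `L.card` if `L` is nonempty, and from `m ≥ 1` otherwise.
      rcases Nat.eq_zero_or_pos L.card with h0 | h0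
      · rw [h0] at h1
        omega
      · rw [mul_add] at hsum
        omega
    rw [lt_div_iff₀ (by exact_mod_cast hΔ)]
    rw [Nat.card_eq_fintype_card (α := (E : Set (Sym2 V)))]
    simp only [Finset.coe_sort_coe, Fintype.card_coe]
    exact_mod_cast hlt
  · have hmem : ∀ v, Δ < Nat.card ((F.deleteEdges (E : Set (Sym2 V))).neighborSet v) → v ∈ L := by
      intro v hv
      refine Finset.mem_filter.2 ⟨Finset.mem_univ _, hv.trans_le ?_⟩
      rw [← F.card_neighborSet_eq_degree, ← Nat.card_eq_fintype_card]
      exact Nat.card_mono (Set.toFinite _) fun w hw => F.deleteEdges_le _ hw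
    rintro c a ⟨hac, ha⟩ b ⟨hbc, hb⟩
    refine hsep a (hmem a ha) b (hmem b hb) (SimpleGraph.ConnectedComponent.exact ?_)
    rw [SimpleGraph.ConnectedComponent.mem_supp_iff] at hac hbc
    exact hac.trans hbc.symm
end

section
/- Let Δ be a positive integer and let F be a forest with m edges in which every connected component contains at most one vertex of degree more than Δ. Then there is a set E_1 of at most m/Δ edges of F such that every connected component K of F − E_1 contains a vertex r_K with the property that every connected component of K − r_K has at most Δ vertices. -/
/-!
For an edge `uv` of the forest write `B(u, v)` (`SimpleGraph.branch`) for the vertex set of the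
branch at `u` through `v`, that is, the vertices reachable from `v` by walks avoiding `u`.
If every branch has at most `Δ` vertices, nothing has to be deleted. Otherwise pick a branch
`S = B(u, v)` of minimum size among those with more than `Δ` vertices. By acyclicity, `uv` is the
only edge leaving `S` (`branch_closed`), and the branches at `v` other than the one through `u` are
proper subsets of `S` (`branch_subset`), hence have at most `Δ` vertices. So after deleting `uv`,
the component `S` has the good vertex `v`. Since `S` is connected with at least `Δ + 1` vertices, it
spans at least `Δ` edges (`ncard_edges_add_le`), which pay for the deleted edge `uv`. The remaining
part of the forest, obtained by isolating the vertices of `S`, is handled by induction on the number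
of edges (`exists_clean`).
-/

namespace SimpleGraph

/-- The branch of `G` at `r` through `w`: the vertices joined to `w` by a walk avoiding `r`.
Used for `w ≠ r`; if `w = r` it is just `{r}`. -/
def branch {V : Type*} (G : SimpleGraph V) (r w : V) : Set V :=
  {x | Relation.ReflTransGen (fun a b => G.Adj a b ∧ a ≠ r ∧ b ≠ r) w x}

/-- The graph on the same vertex set in which all vertices of `S` have been isolated. -/
def isolate {V : Type*} (G : SimpleGraph V) (S : Set V) : SimpleGraph V where
  Adj a b := G.Adj a b ∧ a ∉ S ∧ b ∉ S
  symm := ⟨fun _ _ h => ⟨h.1.symm, h.2.2, h.2.1⟩⟩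
  loopless := ⟨fun _ h => h.1.ne rfl⟩

variable {V : Type*} {F : SimpleGraph V} {u v w x y : V}

lemma mem_branch_self : w ∈ F.branch u w := Relation.ReflTransGen.refl

lemma ne_of_mem_branch (h : w ≠ u) (hx : x ∈ F.branch u w) : x ≠ u := by
  rcases Relation.ReflTransGen.cases_tail hx with h' | ⟨_, _, h'⟩
  · exact h' ▸ h
  · exact h'.2.2

lemma branch_step (h : v ≠ u) (hx : x ∈ F.branch u v) (hxy : F.Adj x y) (hy : y ≠ u) :
    y ∈ F.branch u v :=
  Relation.ReflTransGen.tail hx ⟨hxy, ne_of_mem_branch h hx, hy⟩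

/-- In a forest, `v` is the only neighbour of `u` in the branch at `u` through `v`: the edge `uv`
is a bridge. -/
lemma eq_of_mem_branch_of_adj (hF : F.IsAcyclic) (huv : F.Adj u v) (hx : x ∈ F.branch u v)
    (hxu : F.Adj x u) : x = v := by
  by_contra hne
  have hb := (isAcyclic_iff_forall_adj_isBridge.1 hF) huv
  rw [isBridge_iff] at hb
  have hr : ∀ y ∈ F.branch u v, (F.deleteEdges {s(u, v)}).Reachable v y := by
    intro y hy
    induction hy with
    | refl => exact Reachable.refl _
    | tail _ hab ih =>
      refine ih.trans (Adj.reachable ?_)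
      obtain ⟨h, ha, hb⟩ := hab
      simp [deleteEdges_adj, h]
      tauto
  refine hb ((hr x hx).trans (Adj.reachable ?_)).symm
  simp [deleteEdges_adj, hxu, hne, hxu.ne]

/-- In a forest, the only edge leaving the branch at `u` through `v` is `uv`. -/
lemma branch_closed (hF : F.IsAcyclic) (huv : F.Adj u v) (hx : x ∈ F.branch u v)
    (hxy : F.Adj x y) (hy : y ∉ F.branch u v) : x = v ∧ y = u := by
  have hyu : y = u := by
    by_contra h
    exact hy (branch_step huv.ne' hx hxy h)
  subst hyu
  exact ⟨eq_of_mem_branch_of_adj hF huv hx hxy, rfl⟩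

/-- In a forest, the branches at `v` not passing through `u` lie in the branch at `u`
through `v`. -/
lemma branch_subset (hF : F.IsAcyclic) (huv : F.Adj u v) (hvw : F.Adj v w) (hwu : w ≠ u) :
    F.branch v w ⊆ F.branch u v := by
  have hu : u ∉ F.branch v w := fun h => hwu (eq_of_mem_branch_of_adj hF hvw h huv).symm
  intro x hx
  induction hx with
  | refl => exact branch_step huv.ne' mem_branch_self hvw hwu
  | tail hb hbc ih =>
    refine branch_step huv.ne' ih hbc.1 ?_
    rintro rfl
    exact hu (Relation.ReflTransGen.tail hb hbc)

/-- A branch spans a connected subgraph. -/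
lemma induce_branch_connected : (F.induce (F.branch u v)).Connected := by
  rw [connected_iff_exists_forall_reachable]
  refine ⟨⟨v, mem_branch_self⟩, ?_⟩
  rintro ⟨x, hx⟩
  induction hx with
  | refl => exact Reachable.refl _
  | tail hb hbc ih => exact ih.trans (Adj.reachable (by simpa using hbc.1))

/-- A connected vertex set `S` spans at least `|S| - 1` edges, all of which are lost when `S` is
isolated. -/
lemma ncard_edges_add_le [Finite V] (S : Set V) (hS : (F.induce S).Connected) :
    (F.isolate S).edgeSet.ncard + S.ncard ≤ F.edgeSet.ncard + 1 := by
  classical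
  have h1 : S.ncard ≤ (F.induce S).edgeSet.ncard + 1 := hS.card_vert_le_card_edgeSet_add_one
  have h2 : ((F.induce S).edgeSet.image (Sym2.map Subtype.val)).ncard =
      (F.induce S).edgeSet.ncard :=
    Set.ncard_image_of_injective _ (Sym2.map.injective Subtype.val_injective)
  have h3 : Disjoint (F.isolate S).edgeSet
      ((F.induce S).edgeSet.image (Sym2.map Subtype.val)) := by
    rw [Set.disjoint_left]
    rintro e he ⟨e', _, rfl⟩
    induction e' with
    | _ a b => exact he.2.1 a.2
  have h4 : (F.isolate S).edgeSet ∪ (F.induce S).edgeSet.image (Sym2.map Subtype.val) ⊆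
      F.edgeSet := by
    rintro e (he | ⟨e', he, rfl⟩)
    · induction e with
      | _ a b => exact he.1
    · induction e' with
      | _ a b => exact he
  have h5 := Set.ncard_le_ncard h4 (Set.toFinite _)
  rw [Set.ncard_union_eq h3 (Set.toFinite _) (Set.toFinite _)] at h5
  omega

lemma branch_mono {G H : SimpleGraph V} (h : G ≤ H) : G.branch u v ⊆ H.branch u v := by
  intro x hx
  induction hx with
  | refl => exact mem_branch_self
  | tail _ hbc ih => exact Relation.ReflTransGen.tail ih ⟨h hbc.1, hbc.2⟩

/-- The theorem in terms of branches: every component of the remaining graph contains a vertex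
all of whose branches have at most `Δ` vertices. -/
lemma exists_clean [Finite V] (Δ : ℕ) (F : SimpleGraph V) (hF : F.IsAcyclic) :
    ∃ E ⊆ F.edgeSet, Δ * E.ncard ≤ F.edgeSet.ncard ∧
      ∀ x, ∃ r, (F.deleteEdges E).Reachable x r ∧ ∀ w, (F.deleteEdges E).Adj r w →
        ((F.deleteEdges E).branch r w).ncard ≤ Δ := by
  induction hm : F.edgeSet.ncard using Nat.strong_induction_on generalizing F with
  | _ m ih =>
  subst hm
  by_cases hbig : ∃ p : V × V, F.Adj p.1 p.2 ∧ Δ < (F.branch p.1 p.2).ncard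
  swap
  · push Not at hbig
    refine ⟨∅, by simp, by simp, fun x => ⟨x, Reachable.refl _, fun w hw => ?_⟩⟩
    rw [deleteEdges_empty] at hw ⊢
    exact hbig (x, w) hw
  obtain ⟨⟨u, v⟩, ⟨huv, hS⟩, hmin⟩ := (Set.toFinite
    {p : V × V | F.Adj p.1 p.2 ∧ Δ < (F.branch p.1 p.2).ncard}).exists_minimalFor
    (fun p => (F.branch p.1 p.2).ncard) _ hbig
  simp only at huv hS
  -- By minimality, the branches at `v` other than the one through `u` are small.
  have hsmall : ∀ w, F.Adj v w → w ≠ u → (F.branch v w).ncard ≤ Δ := by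
    intro w hvw hwu
    by_contra! hlt
    have hss : F.branch v w ⊂ F.branch u v :=
      (branch_subset hF huv hvw hwu).ssubset_of_mem_notMem mem_branch_self
        (fun h => ne_of_mem_branch hvw.ne' h rfl)
    have h1 := Set.ncard_lt_ncard hss (Set.toFinite _)
    have h2 := hmin (j := (v, w)) ⟨hvw, hlt⟩ h1.le
    simp only at h2
    omega
  set S := F.branch u v with hSdef
  have hvS : v ∈ S := mem_branch_self
  have huS : u ∉ S := fun h => ne_of_mem_branch huv.ne' h rfl
  have hle : F.isolate S ≤ F := fun _ _ h => h.1
  have hcount := ncard_edges_add_le S (induce_branch_connected (F := F) (u := u) (v := v))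
  -- The edge `uv` is lost as well, so the count drops even if `Δ = 0`.
  have hlt : (F.isolate S).edgeSet.ncard < F.edgeSet.ncard := by
    refine Set.ncard_lt_ncard ⟨edgeSet_mono hle, fun h => ?_⟩ (Set.toFinite _)
    have : s(u, v) ∈ (F.isolate S).edgeSet := h huv
    exact this.2.2 hvS
  obtain ⟨E, hE, hEcard, hclean⟩ := ih _ hlt (F.isolate S) (hF.anti hle) rfl
  have hES : ∀ a b, s(a, b) ∈ E → a ∉ S ∧ b ∉ S := fun a b h => (hE h).2
  refine ⟨insert s(u, v) E, ?_, ?_, ?_⟩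
  · rintro e (rfl | he)
    · exact huv
    · exact edgeSet_mono hle (hE he)
  · have := Set.ncard_insert_le s(u, v) E
    calc Δ * (insert s(u, v) E).ncard ≤ Δ * (E.ncard + 1) := Nat.mul_le_mul_left _ this
      _ = Δ * E.ncard + Δ := by ring
      _ ≤ _ := by omega
  set G := F.deleteEdges (insert s(u, v) E) with hG
  have hGF : G ≤ F := deleteEdges_le _
  have hGadj : ∀ a b, G.Adj a b ↔ F.Adj a b ∧ s(a, b) ≠ s(u, v) ∧ s(a, b) ∉ E := by
    intro a b
    simp [hG, deleteEdges_adj]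
  have hout : ∀ a b, G.Adj a b → a ∉ S → b ∉ S := by
    intro a b hab ha hb
    rw [hGadj] at hab
    obtain ⟨rfl, rfl⟩ := branch_closed hF huv hb hab.1.symm ha
    exact hab.2.1 rfl
  have hG' : ∀ a b, a ∉ S → G.Adj a b → ((F.isolate S).deleteEdges E).Adj a b := by
    intro a b ha hab
    have hb := hout a b hab ha
    rw [hGadj] at hab
    rw [deleteEdges_adj]
    exact ⟨⟨hab.1, ha, hb⟩, hab.2.2⟩
  have hG'G : (F.isolate S).deleteEdges E ≤ G := by
    intro a b hab
    rw [deleteEdges_adj] at hab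
    refine (hGadj a b).2 ⟨hab.1.1, fun h => ?_, hab.2⟩
    rcases Sym2.eq_iff.1 h with ⟨_, rfl⟩ | ⟨rfl, _⟩
    · exact hab.1.2.2 hvS
    · exact hab.1.2.1 hvS
  intro x
  by_cases hx : x ∈ S
  · refine ⟨v, ?_, fun w hw => ?_⟩
    · have hr := (induce_branch_connected (F := F) (u := u) (v := v)).preconnected
        ⟨x, hx⟩ ⟨v, hvS⟩
      let f : F.induce S →g G :=
        { toFun := Subtype.val
          map_rel' := by
            intro a b hab
            refine (hGadj _ _).2 ⟨hab, fun h => ?_, fun h => (hES _ _ h).1 a.2⟩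
            rcases Sym2.eq_iff.1 h with ⟨h, _⟩ | ⟨_, h⟩
            · exact huS (h ▸ a.2)
            · exact huS (h ▸ b.2) }
      exact hr.map f
    · have hw' := (hGadj _ _).1 hw
      have hwu : w ≠ u := by
        rintro rfl
        exact hw'.2.1 Sym2.eq_swap
      exact (Set.ncard_le_ncard (branch_mono hGF) (Set.toFinite _)).trans (hsmall w hw'.1 hwu)
  · obtain ⟨r, hxr, hr⟩ := hclean x
    refine ⟨r, hxr.mono hG'G, fun w hw => ?_⟩
    have hrS : r ∉ S := by
      obtain ⟨p⟩ := hxr.symm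
      cases p with
      | nil => exact hx
      | cons h _ => exact (deleteEdges_adj.1 h).1.2.1
    refine (Set.ncard_le_ncard ?_ (Set.toFinite _)).trans (hr w (hG' _ _ hrS hw))
    have hwS := hout _ _ hw hrS
    suffices h : ∀ z ∈ G.branch r w, z ∉ S ∧ z ∈ ((F.isolate S).deleteEdges E).branch r w from
      fun z hz => (h z hz).2
    intro z hz
    induction hz with
    | refl => exact ⟨hwS, mem_branch_self⟩
    | tail _ hbc ih' =>
      exact ⟨hout _ _ hbc.1 ih'.1,
        Relation.ReflTransGen.tail ih'.2 ⟨hG' _ _ ih'.1 hbc.1, hbc.2⟩⟩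

/-- Every vertex other than `r` in the component of `r` lies in a branch at `r`. -/
lemma Reachable.exists_mem_branch {r : V} (h : F.Reachable r x) (hx : x ≠ r) :
    ∃ w, F.Adj r w ∧ x ∈ F.branch r w := by
  rw [reachable_iff_reflTransGen] at h
  induction h with
  | refl => exact absurd rfl hx
  | @tail b c _ hbc ih =>
    by_cases hb : b = r
    · subst hb
      exact ⟨c, hbc, mem_branch_self⟩
    · obtain ⟨w, hw, hbw⟩ := ih hb
      exact ⟨w, hw, branch_step hw.ne' hbw hbc hx⟩

end SimpleGraph

open SimpleGraph in
/-- Let `Δ` be a positive integer and `F` a forest with `m` edges in which every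
connected component contains at most one vertex of degree more than `Δ`.  Then there is
a set `E₁` of at most `m/Δ` edges of `F` such that every connected component `K` of
`F − E₁` contains a vertex `r` such that every connected component of `K − r` has at
most `Δ` vertices. -/
theorem exists_edgeSet_clean_roots {V : Type*} [Fintype V] (Δ : ℕ) (hΔ : 0 < Δ)
    (F : SimpleGraph V) (hF : F.IsAcyclic)
    (hone : ∀ c : F.ConnectedComponent,
      {v : V | v ∈ c.supp ∧ Δ < Nat.card (F.neighborSet v)}.Subsingleton) :
    ∃ E₁ ⊆ F.edgeSet, (Nat.card E₁ : ℚ) ≤ Nat.card F.edgeSet / Δ ∧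
      ∀ c : (F.deleteEdges E₁).ConnectedComponent, ∃ r ∈ c.supp,
        ∀ c' : ((F.deleteEdges E₁).induce (c.supp \ {r})).ConnectedComponent,
          Nat.card c'.supp ≤ Δ := by
  obtain ⟨E, hE, hcard, hclean⟩ := exists_clean Δ F hF
  refine ⟨E, hE, ?_, fun c => ?_⟩
  · rw [le_div_iff₀ (by exact_mod_cast hΔ), mul_comm]
    exact_mod_cast hcard
  induction c using ConnectedComponent.ind with | _ x => ?_
  obtain ⟨r, hxr, hr⟩ := hclean x
  refine ⟨r, ConnectedComponent.sound hxr.symm, fun c' => ?_⟩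
  induction c' using ConnectedComponent.ind with | _ y => ?_
  have hxy : (F.deleteEdges E).Reachable y.1 x := ConnectedComponent.exact y.2.1
  obtain ⟨w, hw, hyw⟩ := (hxy.trans hxr).symm.exists_mem_branch y.2.2
  refine le_trans ?_ (hr w hw)
  -- The component of `y` after deleting `r` is contained in the branch containing `y`.
  rw [Nat.card_coe_set_eq, ← Set.ncard_image_of_injective _ Subtype.val_injective]
  refine Set.ncard_le_ncard ?_ (Set.toFinite _)
  rintro _ ⟨z, hz, rfl⟩
  have hyz := (ConnectedComponent.exact hz).symm
  rw [reachable_iff_reflTransGen] at hyz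
  induction hyz with
  | refl => exact hyw
  | @tail b c _ hbc ih =>
    have hb := ih (ConnectedComponent.sound hbc.reachable |>.trans hz)
    exact branch_step hw.ne' hb hbc c.2.2
end

section
/- Let ε ∈ (0,1), let Δ be a positive integer, let K be a tree with a distinguished root vertex r such that every connected component of K − r has at most Δ vertices, let d be the degree of r in K, and suppose δ := ⌊εd/(Δ·C(2Δ,Δ))⌋ ≥ 1, where C(2Δ,Δ) is the binomial coefficient (2Δ choose Δ). Then there exists a spanning subforest K' of K containing every edge of K incident with r such that: every component of K' not containing r is a single vertex; in the component of K' containing r, for every rooted tree T with at least 2 vertices, the number of components L of that component minus r that are isomorphic to T as trees rooted at the neighbor of r in L is a multiple of δ; and m(K) − m(K') ≤ εd. -/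
/-!
Call the components of `K - r` branches, each rooted in its unique neighbor of `r`. The graph `K'`
is obtained from `K` by deleting all edges inside some branches, chosen so that the number of
untouched branches of each isomorphism type is a multiple of `δ`; the branches cut up in this way
fall into single vertices, which do not count as copies of a tree with at least two vertices.

The cost is controlled by counting rooted trees with at most `Δ` vertices. Number the vertices of
such a tree in breadth-first order, so that the map from the number of a vertex to the number of
its parent is monotone (`IsParentMap.exists_key`). Sending the unused numbers to `Δ` extends it to
a monotone map `Fin Δ →o Fin (Δ + 1)`, from which the rooted tree can be recovered up to
isomorphism (`IsParentMap.exists_isCode`, `IsCode.exists_iso`). By stars and bars there are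
`(2 * Δ).choose Δ` such maps (`card_orderHom_le`). Branches are grouped by their code rather than by
isomorphism type; since equal codes give isomorphic branches, each isomorphism type is a union of
such groups, so it is enough to make every group size a multiple of `δ`. This discards fewer than
`δ` branches per code (`exists_discard`), and each discarded branch costs at most `Δ` edges, so at
most `δ * Δ * (2 * Δ).choose Δ ≤ ε * d` edges are lost (`card_edgeSet_le`).

Rooted trees are handled through their parent maps (`IsParentMap`); a second map `ρ`
(`IsTopMap`), defined by recursion along the first, sends a vertex to the root of its branch and so
identifies the components of `K - r`.
-/

/-- `rootedCount G r S T t` is the number of connected components `L` of the subgraph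
of `G` induced on `S` that contain a neighbor `u` of `r` and are isomorphic, as trees
rooted in this neighbor `u`, to the tree `T` rooted in `t` (an isomorphism of rooted
trees is a graph isomorphism mapping root to root). -/
noncomputable def rootedCount {V : Type*} (G : SimpleGraph V) (r : V) (S : Set V)
    {k : ℕ} (T : SimpleGraph (Fin k)) (t : Fin k) : ℕ :=
  Nat.card { c : (G.induce S).ConnectedComponent //
    ∃ (u : S) (hu : u ∈ c.supp) (φ : (G.induce S).induce c.supp ≃g T),
      G.Adj r ↑u ∧ φ ⟨u, hu⟩ = t }

/-! ### Parent maps of rooted trees -/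

/-- `p` is a parent map, with height function `h`, for the graph `G` rooted in `w`: it fixes `w`,
strictly decreases `h` at every other vertex, and the edges of `G` are exactly the pairs `a, p a`
with `a ≠ w`. Such a pair `(p, h)` exhibits `G` as a tree rooted in `w`. -/
structure IsParentMap {W : Type*} (G : SimpleGraph W) (w : W) (p : W → W) (h : W → ℕ) : Prop where
  root : p w = w
  lt : ∀ a, a ≠ w → h (p a) < h a
  adj : ∀ a b, G.Adj a b ↔ a ≠ b ∧ (p a = b ∨ p b = a)

theorem IsParentMap.ne {W : Type*} {G : SimpleGraph W} {w : W} {p : W → W} {h : W → ℕ}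
    (hp : IsParentMap G w p h) {a : W} (ha : a ≠ w) : a ≠ p a := fun e => by
  have := hp.lt a ha
  rw [← e] at this
  exact lt_irrefl _ this

theorem IsParentMap.adj_parent {W : Type*} {G : SimpleGraph W} {w : W} {p : W → W} {h : W → ℕ}
    (hp : IsParentMap G w p h) {a : W} (ha : a ≠ w) : G.Adj a (p a) :=
  (hp.adj _ _).2 ⟨hp.ne ha, Or.inl rfl⟩

theorem exists_isParentMap {V : Type*} [Fintype V] (K : SimpleGraph V) (hK : K.IsTree) (r : V) :
    ∃ p h, IsParentMap K r p h := by
  classical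
  have hstep : ∀ a : V, ∃ b, a ≠ r → K.Adj a b ∧ K.dist b r < K.dist a r := by
    intro a
    by_cases ha : a = r
    · exact ⟨r, fun h => absurd ha h⟩
    obtain ⟨q, hq⟩ := hK.connected.exists_walk_length_eq_dist a r
    cases q with
    | nil => exact absurd rfl ha
    | cons hadj q' =>
      refine ⟨_, fun _ => ⟨hadj, ?_⟩⟩
      have := K.dist_le q'
      rw [SimpleGraph.Walk.length_cons] at hq
      omega
  choose p₀ hp₀ using hstep
  set p : V → V := fun a => if a = r then r else p₀ a with hpdef
  have hpr : p r = r := by simp [hpdef]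
  have hpa : ∀ a, a ≠ r → K.Adj a (p a) ∧ K.dist (p a) r < K.dist a r := by
    intro a ha
    simpa [hpdef, ha] using hp₀ a ha
  -- `a ↦ s(a, p a)` is injective off the root, hence by counting it hits every edge of the tree
  have hsurj : (Finset.univ.erase r).image (fun a => s(a, p a)) = K.edgeFinset := by
    apply Finset.eq_of_subset_of_card_le
    · intro e he
      simp only [Finset.mem_image, Finset.mem_erase, Finset.mem_univ, and_true] at he
      obtain ⟨a, ha, rfl⟩ := he
      simpa using (hpa a ha).1
    · rw [Finset.card_image_of_injOn, Finset.card_erase_of_mem (Finset.mem_univ _),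
        Finset.card_univ, ← hK.card_edgeFinset]
      · simp
      · intro a ha b hb hab
        simp only [Finset.coe_erase, Finset.coe_univ, Set.mem_sdiff, Set.mem_univ,
          Set.mem_singleton_iff, true_and] at ha hb
        have h1 := (hpa a ha).2
        have h2 := (hpa b hb).2
        rcases Sym2.eq_iff.1 hab with h | h
        · exact h.1
        · rw [h.2] at h1
          rw [← h.1] at h2
          omega
  refine ⟨p, fun a => K.dist a r, hpr, fun a ha => (hpa a ha).2, fun a b => ⟨fun hab => ?_, ?_⟩⟩
  · refine ⟨hab.ne, ?_⟩
    have : s(a, b) ∈ K.edgeFinset := by simpa using hab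
    rw [← hsurj] at this
    simp only [Finset.mem_image] at this
    obtain ⟨c, -, hc⟩ := this
    rcases Sym2.eq_iff.1 hc with h | h
    · left; rw [← h.1]; exact h.2
    · right; rw [← h.1]; exact h.2
  · rintro ⟨hne, h | h⟩
    · have har : a ≠ r := by rintro rfl; exact hne (hpr.symm.trans h)
      exact h ▸ (hpa a har).1
    · have hbr : b ≠ r := by rintro rfl; exact hne (h.symm.trans hpr)
      exact h ▸ (hpa b hbr).1.symm

/-! ### Encoding rooted trees by monotone maps -/

/-- `f` encodes the rooted graph `(G, w)`: for some numbering `e` of the vertices by an initial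
segment of `Fin Δ`, starting with the root, two distinct vertices are adjacent exactly when `f`
sends the number of one of them to the number of the other; the unused numbers are exactly those
sent to `Δ`. -/
def IsCode {W : Type*} (G : SimpleGraph W) (w : W) {Δ : ℕ} (f : Fin Δ →o Fin (Δ + 1)) : Prop :=
  ∃ e : W → Fin Δ, Function.Injective e ∧ (e w : ℕ) = 0 ∧
    (∀ i, (∃ a, e a = i) ↔ (f i : ℕ) < Δ) ∧
    ∀ a b, G.Adj a b ↔ a ≠ b ∧ ((f (e a) : ℕ) = e b ∨ (f (e b) : ℕ) = e a)

theorem IsCode.exists_iso {W W' : Type*} {G : SimpleGraph W} {w : W} {G' : SimpleGraph W'}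
    {w' : W'} {Δ : ℕ} {f : Fin Δ →o Fin (Δ + 1)} (hf : IsCode G w f) (hf' : IsCode G' w' f) :
    ∃ φ : G ≃g G', φ w = w' := by
  obtain ⟨e, he, hw, hr, ha⟩ := hf
  obtain ⟨e', he', hw', hr', ha'⟩ := hf'
  have h1 : ∀ a, ∃ b, e' b = e a := fun a => (hr' _).2 ((hr _).1 ⟨a, rfl⟩)
  have h2 : ∀ b, ∃ a, e a = e' b := fun b => (hr _).2 ((hr' _).1 ⟨b, rfl⟩)
  choose φ hφ using h1
  choose ψ hψ using h2
  refine ⟨⟨⟨φ, ψ, fun a => he ?_, fun b => he' ?_⟩, ?_⟩, ?_⟩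
  · rw [hψ, hφ]
  · rw [hφ, hψ]
  · intro a b
    have hinj : φ a ≠ φ b ↔ a ≠ b := by
      rw [not_iff_not, ← he'.eq_iff, hφ, hφ, he.eq_iff]
    simp only [Equiv.coe_fn_mk]
    rw [ha, ha', hφ, hφ, hinj]
  · apply he'
    apply Fin.ext
    change ((e' (φ w) : Fin Δ) : ℕ) = _
    rw [hφ, hw, hw']

/-- Reading a vertex as the base-`N` numeral spelled by its ancestor line (with leading digit `1`
for the root) numbers the vertices injectively and makes the parent map monotone, since passing to
the parent is division by `N`. -/
theorem IsParentMap.exists_key {W : Type*} [Finite W] {G : SimpleGraph W} {w : W} {p : W → W}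
    {h : W → ℕ} (hp : IsParentMap G w p h) :
    ∃ key : W → ℕ, Function.Injective key ∧ (∀ a, key w ≤ key a) ∧
      ∀ a b, key a ≤ key b → key (p a) ≤ key (p b) := by
  classical
  obtain ⟨n, ⟨e₀⟩⟩ := Finite.exists_equiv_fin W
  set N := n + 2 with hN
  let F : ∀ a : W, (∀ b : W, h b < h a → ℕ) → ℕ := fun a rec =>
    if ha : a = w then 1 else N * rec (p a) (hp.lt a ha) + e₀ a
  let wf : WellFounded fun a b : W => h a < h b := (measure h).wf
  let key : W → ℕ := wf.fix F
  have hkey : ∀ a, key a = if a = w then 1 else N * key (p a) + e₀ a := by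
    intro a
    change wf.fix F a = _
    rw [wf.fix_eq]
    by_cases ha : a = w <;> simp [F, ha, key]
  have hkw : key w = 1 := by rw [hkey, if_pos rfl]
  have hka : ∀ a, a ≠ w → key a = N * key (p a) + e₀ a := fun a ha => by rw [hkey, if_neg ha]
  have hlt : ∀ a, (e₀ a : ℕ) < N := fun a => by have := (e₀ a).2; omega
  have hdiv : ∀ a, a ≠ w → key (p a) = key a / N := fun a ha => by
    rw [hka a ha, Nat.mul_add_div (by omega), Nat.div_eq_of_lt (hlt a), add_zero]
  have hpos : ∀ k a, h a = k → 1 ≤ key a := by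
    intro k
    induction k using Nat.strong_induction_on with
    | _ k ih =>
      rintro a rfl
      by_cases ha : a = w
      · rw [ha, hkw]
      · have := ih _ (hp.lt a ha) _ rfl
        rw [hka a ha]
        nlinarith
  have hbig : ∀ a, a ≠ w → 1 < key a := fun a ha => by
    have := hpos _ (p a) rfl
    rw [hka a ha]
    nlinarith
  have hinj : ∀ k a b, h a = k → key a = key b → a = b := by
    intro k
    induction k using Nat.strong_induction_on with
    | _ k ih =>
      rintro a b rfl hab
      by_cases ha : a = w
      · by_contra hne
        have := hbig b (fun hb => hne (ha.trans hb.symm))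
        rw [← hab, ha, hkw] at this
        exact lt_irrefl _ this
      · have hb : b ≠ w := by
          rintro rfl
          have := hbig a ha
          omega
        have h1 : key (p a) = key (p b) := by rw [hdiv a ha, hdiv b hb, hab]
        have h2 := hka a ha
        have h3 := hka b hb
        rw [h1] at h2
        exact e₀.injective (Fin.ext (by omega))
  refine ⟨key, fun a b => hinj _ a b rfl, fun a => hkw ▸ hpos _ a rfl, fun a b hab => ?_⟩
  by_cases ha : a = w
  · rw [ha, hp.root, hkw]
    exact hpos _ _ rfl
  · have hb : b ≠ w := by
      rintro rfl
      have := hbig a ha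
      omega
    rw [hdiv a ha, hdiv b hb]
    exact Nat.div_le_div_right hab

theorem IsParentMap.exists_isCode {W : Type*} [Finite W] {G : SimpleGraph W} {w : W} {p : W → W}
    {h : W → ℕ} (hp : IsParentMap G w p h) {Δ : ℕ} (hΔ : Nat.card W ≤ Δ) :
    ∃ f : Fin Δ →o Fin (Δ + 1), IsCode G w f := by
  classical
  obtain ⟨key, hinj, hmin, hmono⟩ := hp.exists_key
  have := Fintype.ofFinite W
  have hs : (Finset.univ.image key).card = Nat.card W := by
    rw [Finset.card_image_of_injective _ hinj, Finset.card_univ, Nat.card_eq_fintype_card]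
  let o := (Finset.univ.image key).orderIsoOfFin hs
  have hmem : ∀ a, key a ∈ Finset.univ.image key := fun a => by simp
  let e : W → Fin (Nat.card W) := fun a => o.symm ⟨key a, hmem a⟩
  have hle : ∀ a b, e a ≤ e b ↔ key a ≤ key b := fun a b => by simp [e]
  have he : Function.Injective e := fun a b hab =>
    hinj (le_antisymm ((hle _ _).1 hab.le) ((hle _ _).1 hab.ge))
  have hsurj : Function.Surjective e := by
    intro i
    obtain ⟨a, -, ha⟩ := Finset.mem_image.1 (o i).2
    refine ⟨a, ?_⟩
    simp only [e]
    rw [OrderIso.symm_apply_eq]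
    exact Subtype.ext ha
  choose inv hinv using hsurj
  have hinv' : ∀ a, inv (e a) = a := fun a => he (hinv _)
  let f₀ : Fin Δ → Fin (Δ + 1) := fun i =>
    if hi : (i : ℕ) < Nat.card W then ⟨e (p (inv ⟨i, hi⟩)), by
      have := (e (p (inv ⟨i, hi⟩))).2; omega⟩ else Fin.last Δ
  have hf₀ : Monotone f₀ := by
    intro i j hij
    by_cases hj : (j : ℕ) < Nat.card W
    · have hi : (i : ℕ) < Nat.card W := lt_of_le_of_lt hij hj
      simp only [f₀, hi, hj, dif_pos]
      rw [Fin.mk_le_mk, Fin.val_fin_le, hle]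
      apply hmono
      rw [← hle, hinv, hinv]
      exact hij
    · simp only [f₀, hj, dif_neg, not_false_eq_true]
      exact Fin.le_last _
  have hf₀e : ∀ a (h : (e a : ℕ) < Δ), (f₀ ⟨e a, h⟩ : ℕ) = e (p a) := by
    intro a h
    simp [f₀, hinv', -Nat.card_eq_fintype_card]
  have heΔ : ∀ a, (e a : ℕ) < Δ := fun a => lt_of_lt_of_le (e a).2 hΔ
  refine ⟨⟨f₀, hf₀⟩, fun a => ⟨e a, heΔ a⟩, ?_, ?_, ?_, ?_⟩
  · intro a b hab
    exact he (Fin.ext (by simpa using hab))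
  · have hpos : 0 < Nat.card W := lt_of_le_of_lt (Nat.zero_le _) (e w).2
    have := (hle w (inv ⟨0, hpos⟩)).2 (hmin _)
    rw [hinv] at this
    exact Nat.le_zero.1 this
  · intro i
    change _ ↔ (f₀ i : ℕ) < Δ
    constructor
    · rintro ⟨a, rfl⟩
      rw [hf₀e]
      exact heΔ _
    · intro hi
      by_cases hi' : (i : ℕ) < Nat.card W
      · exact ⟨inv ⟨i, hi'⟩, Fin.ext (by simp [hinv])⟩
      · simp [f₀, hi', -Nat.card_eq_fintype_card] at hi
  · intro a b
    change _ ↔ a ≠ b ∧ ((f₀ ⟨e a, heΔ a⟩ : ℕ) = e b ∨ (f₀ ⟨e b, heΔ b⟩ : ℕ) = e a)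
    rw [hp.adj, hf₀e, hf₀e, Fin.val_inj, Fin.val_inj, he.eq_iff, he.eq_iff]

/-! ### Counting -/

/-- A monotone map out of `Fin Δ` is determined by the multiset of its values, so stars and bars
bounds the number of such maps. -/
theorem card_orderHom_le (Δ : ℕ) [Fintype (Fin Δ →o Fin (Δ + 1))] :
    Fintype.card (Fin Δ →o Fin (Δ + 1)) ≤ (2 * Δ).choose Δ := by
  classical
  have hcard : Fintype.card (Sym (Fin (Δ + 1)) Δ) = (2 * Δ).choose Δ := by
    rw [Sym.card_sym_eq_choose, Fintype.card_fin]
    congr 1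
    omega
  rw [← hcard]
  refine Fintype.card_le_of_injective
    (fun f => (⟨(List.ofFn f : List (Fin (Δ + 1))), by simp⟩ : Sym (Fin (Δ + 1)) Δ)) ?_
  intro f g hfg
  have hperm : (List.ofFn f).Perm (List.ofFn g) := Multiset.coe_eq_coe.1 (Subtype.ext_iff.1 hfg)
  have := hperm.eq_of_pairwise' (r := (· ≤ ·))
    (List.pairwise_ofFn.2 fun i j hij => f.monotone hij.le)
    (List.pairwise_ofFn.2 fun i j hij => g.monotone hij.le)
  exact DFunLike.ext' (List.ofFn_injective this)

/-- In every fibre of `code`, fewer than `δ` elements have to be discarded to make the number of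
remaining ones a multiple of `δ`. -/
theorem exists_discard {α F : Type*} [Fintype F] [DecidableEq α] [DecidableEq F] (N : Finset α)
    (code : α → F) {δ : ℕ} (hδ : 1 ≤ δ) :
    ∃ B ⊆ N, (∀ f, δ ∣ ((N \ B).filter (code · = f)).card) ∧ B.card ≤ δ * Fintype.card F := by
  have hex : ∀ f, ∃ t ⊆ N.filter (code · = f), t.card = (N.filter (code · = f)).card % δ :=
    fun f => Finset.exists_subset_card_eq (Nat.mod_le _ _)
  choose t ht hc using hex
  refine ⟨Finset.univ.biUnion t, ?_, fun f => ?_, ?_⟩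
  · exact Finset.biUnion_subset.2 fun f _ => (ht f).trans (Finset.filter_subset _ _)
  · have : (N \ Finset.univ.biUnion t).filter (code · = f) = N.filter (code · = f) \ t f := by
      ext a
      simp only [Finset.mem_filter, Finset.mem_sdiff, Finset.mem_biUnion, Finset.mem_univ,
        true_and, not_exists]
      constructor
      · rintro ⟨⟨h1, h2⟩, h3⟩
        exact ⟨⟨h1, h3⟩, h2 f⟩
      · rintro ⟨⟨h1, h3⟩, h2⟩
        refine ⟨⟨h1, fun g hg => ?_⟩, h3⟩
        have := (Finset.mem_filter.1 (ht g hg)).2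
        rw [h3] at this
        exact h2 (this ▸ hg)
    rw [this, Finset.card_sdiff_of_subset (ht f), hc]
    exact Nat.dvd_sub_mod _
  · refine Finset.card_biUnion_le.trans ?_
    calc ∑ f, (t f).card ≤ ∑ _f : F, δ := Finset.sum_le_sum fun f _ => by
          rw [hc]; exact (Nat.mod_lt _ hδ).le
      _ = δ * Fintype.card F := by simp [mul_comm]

/-! ### The branches at the root -/

/-- `ρ` sends every vertex other than the root `r` to the neighbor of `r` in its component of
`K - r`; it is constant on these components and fixes the neighbors of `r`. -/
structure IsTopMap {V : Type*} (K : SimpleGraph V) (r : V) (ρ : V → V) : Prop where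
  adj : ∀ v, v ≠ r → K.Adj r (ρ v)
  eq : ∀ a b, a ≠ r → b ≠ r → K.Adj a b → ρ a = ρ b
  self : ∀ u, K.Adj r u → ρ u = u

theorem IsParentMap.parent_of_adj {V : Type*} {K : SimpleGraph V} {r : V} {p : V → V} {h : V → ℕ}
    (hp : IsParentMap K r p h) {u : V} (hu : K.Adj r u) : p u = r := by
  rcases ((hp.adj _ _).1 hu).2 with h | h
  · exact absurd (hp.root.symm.trans h) hu.ne
  · exact h

theorem IsParentMap.exists_isTopMap {V : Type*} {K : SimpleGraph V} {r : V} {p : V → V} {h : V → ℕ}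
    (hp : IsParentMap K r p h) : ∃ ρ, IsTopMap K r ρ := by
  classical
  let F : ∀ a : V, (∀ b : V, h b < h a → V) → V := fun a rec =>
    if ha : a = r then r else if p a = r then a else rec (p a) (hp.lt a ha)
  let wf : WellFounded fun a b : V => h a < h b := (measure h).wf
  let ρ : V → V := wf.fix F
  have hρ : ∀ a, ρ a = if a = r then r else if p a = r then a else ρ (p a) := by
    intro a
    change wf.fix F a = _
    rw [wf.fix_eq]
    by_cases ha : a = r <;> simp [F, ha, ρ]
  have h1 : ∀ a, a ≠ r → p a = r → ρ a = a := fun a ha hpa => by rw [hρ, if_neg ha, if_pos hpa]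
  have h2 : ∀ a, a ≠ r → p a ≠ r → ρ a = ρ (p a) := fun a ha hpa => by
    rw [hρ, if_neg ha, if_neg hpa]
  refine ⟨ρ, ⟨?_, ?_, fun u hu => h1 u hu.ne' (hp.parent_of_adj hu)⟩⟩
  · suffices ∀ k v, h v = k → v ≠ r → K.Adj r (ρ v) from fun v => this _ v rfl
    intro k
    induction k using Nat.strong_induction_on with
    | _ k ih =>
      rintro v rfl hv
      by_cases hpv : p v = r
      · rw [h1 v hv hpv]
        exact hpv ▸ (hp.adj_parent hv).symm
      · rw [h2 v hv hpv]
        exact ih _ (hp.lt v hv) _ rfl hpv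
  · intro a b ha hb hab
    rcases ((hp.adj _ _).1 hab).2 with h | h
    · rw [h2 a ha (h ▸ hb), h]
    · rw [h2 b hb (h ▸ ha), h]

/-- The vertex set of the component of `K - r` containing the neighbor `u` of `r`, in terms of the
map `ρ` sending each vertex to the neighbor of `r` in its component. -/
def branch {V : Type*} (r : V) (ρ : V → V) (u : V) : Set V := {v | v ≠ r ∧ ρ v = u}

/-- A branch of a rooted tree inherits a parent map: redirect its top vertex to itself. -/
theorem IsParentMap.branch {V : Type*} {K : SimpleGraph V} {r : V} {p : V → V} {h : V → ℕ}
    (hp : IsParentMap K r p h) {ρ : V → V} (hρ : IsTopMap K r ρ) {u : V}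
    (hu : u ∈ branch r ρ u) (hru : K.Adj r u) :
    ∃ p' h', IsParentMap (K.induce (branch r ρ u)) ⟨u, hu⟩ p' h' := by
  classical
  have hmem : ∀ v ∈ _root_.branch r ρ u, v ≠ u → p v ∈ _root_.branch r ρ u := by
    intro v hv hvu
    have hadj := hp.adj_parent hv.1
    have hpv : p v ≠ r := by
      intro hpv
      rw [hpv] at hadj
      exact hvu ((hρ.self v hadj.symm).symm.trans hv.2)
    exact ⟨hpv, (hρ.eq _ _ hv.1 hpv hadj).symm.trans hv.2⟩
  refine ⟨fun v => if hv : v.1 = u then ⟨u, hu⟩ else ⟨p v, hmem v v.2 hv⟩, fun v => h v,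
    by simp, ?_, ?_⟩
  · intro a ha
    have : a.1 ≠ u := fun h => ha (Subtype.ext h)
    simpa [this] using hp.lt a a.2.1
  · intro a b
    have key : ∀ a b : _root_.branch r ρ u, a ≠ b →
        ((if hv : a.1 = u then (⟨u, hu⟩ : _root_.branch r ρ u) else ⟨p a, hmem a a.2 hv⟩) = b ↔
          p a = b) := by
      intro a b hab
      by_cases ha : a.1 = u
      · simp only [ha, dif_pos]
        refine iff_of_false (fun hb => hab ((Subtype.ext ha).trans hb)) fun hb => ?_
        rw [hp.parent_of_adj hru] at hb
        exact b.2.1 hb.symm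
      · simp only [ha, dif_neg, not_false_eq_true]
        exact Subtype.ext_iff
    rw [SimpleGraph.induce_adj, hp.adj, Subtype.coe_ne_coe]
    constructor
    · rintro ⟨hne, h⟩
      exact ⟨hne, h.imp (key a b hne).2 (key b a (Ne.symm hne)).2⟩
    · rintro ⟨hne, h⟩
      exact ⟨hne, h.imp (key a b hne).1 (key b a (Ne.symm hne)).1⟩

/-- A subgraph `G` of the tree that contains all parent edges inside the branches outside `B`
keeps these branches connected. -/
theorem IsParentMap.reachable_top {V : Type*} {K : SimpleGraph V} {r : V} {p : V → V} {h : V → ℕ}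
    (hp : IsParentMap K r p h) {ρ : V → V} (hρ : IsTopMap K r ρ) {B : Set V} {G : SimpleGraph V}
    (hG : ∀ a, a ≠ r → p a ≠ r → ρ a ∉ B → G.Adj a (p a)) (v u : {v : V | v ≠ r})
    (hv : ρ v ∉ B) (hu : ρ v = u) : (G.induce {v : V | v ≠ r}).Reachable v u := by
  suffices ∀ k (v : {v : V | v ≠ r}), h v = k → ρ v ∉ B → ρ v = u →
      (G.induce {v : V | v ≠ r}).Reachable v u from this _ v rfl hv hu
  intro k
  induction k using Nat.strong_induction_on with
  | _ k ih =>
    rintro v rfl hv hu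
    have hvr : v.1 ≠ r := v.2
    have hadj := hp.adj_parent hvr
    by_cases hpv : p v = r
    · rw [hpv] at hadj
      rw [hρ.self v hadj.symm] at hu
      rw [Subtype.ext hu]
    · have hE := hρ.eq _ _ hvr hpv hadj
      have hstep : (G.induce {v : V | v ≠ r}).Adj v ⟨p v, hpv⟩ := hG v hvr hpv hv
      exact hstep.reachable.trans (ih _ (hp.lt v hvr) ⟨p v, hpv⟩ rfl (hE ▸ hv) (hE ▸ hu))

/-! ### Pruning -/

/-- The graph obtained from `K` by deleting all edges inside the branches whose top vertex lies
in `B`. -/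
def prune {V : Type*} (K : SimpleGraph V) (r : V) (ρ : V → V) (B : Set V) : SimpleGraph V where
  Adj a b := K.Adj a b ∧ (a = r ∨ b = r ∨ (ρ a ∉ B ∧ ρ b ∉ B))
  symm := ⟨fun a b h => ⟨h.1.symm, by tauto⟩⟩
  loopless := ⟨fun a h => K.loopless.irrefl a h.1⟩

section prune

variable {V : Type*} {K : SimpleGraph V} {r : V} {p : V → V} {h : V → ℕ} {ρ : V → V} {B : Set V}

theorem prune_le : prune K r ρ B ≤ K := fun _ _ h => h.1

theorem prune_adj_parent (hp : IsParentMap K r p h) (hρ : IsTopMap K r ρ) (a : V) (ha : a ≠ r)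
    (hpa : p a ≠ r) (haB : ρ a ∉ B) : (prune K r ρ B).Adj a (p a) :=
  ⟨hp.adj_parent ha, Or.inr (Or.inr ⟨haB, hρ.eq _ _ ha hpa (hp.adj_parent ha) ▸ haB⟩)⟩

theorem top_eq_of_reachable (hρ : IsTopMap K r ρ) {a b : {v : V | v ≠ r}}
    (hab : ((prune K r ρ B).induce {v : V | v ≠ r}).Reachable a b) : ρ a = ρ b := by
  obtain ⟨q⟩ := hab
  induction q with
  | nil => rfl
  | @cons x y _ hadj _ ih => exact (hρ.eq x y x.2 y.2 hadj.1).trans ih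

theorem eq_of_reachable {a b : {v : V | v ≠ r}}
    (hab : ((prune K r ρ B).induce {v : V | v ≠ r}).Reachable a b) (ha : ρ a ∈ B) : a = b := by
  obtain ⟨q⟩ := hab
  cases q with
  | nil => rfl
  | @cons _ y _ hadj _ =>
    rcases hadj.2 with h | h | h
    · exact absurd h a.2
    · exact absurd h y.2
    · exact absurd ha h.1

/-- Pruning isolates every vertex that it separates from the root. -/
theorem prune_subsingleton (hp : IsParentMap K r p h) (hρ : IsTopMap K r ρ)
    (c : (prune K r ρ B).ConnectedComponent) (hc : r ∉ c.supp) : c.supp.Subsingleton := by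
  have hc' : ∀ x ∈ c.supp, ¬ (prune K r ρ B).Reachable x r := by
    intro x hx hxr
    apply hc
    rw [SimpleGraph.ConnectedComponent.mem_supp_iff] at hx ⊢
    rw [← hx]
    exact (SimpleGraph.ConnectedComponent.sound hxr).symm
  intro x hx y hy
  have hxr : x ≠ r := fun h => hc (h ▸ hx)
  have hxB : ρ x ∈ B := by
    by_contra hxB
    have hadj := hρ.adj x hxr
    have h1 := (hp.reachable_top hρ (prune_adj_parent hp hρ) ⟨x, hxr⟩ ⟨ρ x, hadj.ne'⟩ hxB rfl).map
      (SimpleGraph.Embedding.induce _).toHom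
    exact hc' x hx (h1.trans (SimpleGraph.Adj.reachable (G := prune K r ρ B)
      ⟨hadj.symm, Or.inr (Or.inl rfl)⟩))
  have hxy : (prune K r ρ B).Reachable x y := by
    rw [SimpleGraph.ConnectedComponent.mem_supp_iff] at hx hy
    exact SimpleGraph.ConnectedComponent.exact (hx.trans hy.symm)
  obtain ⟨q⟩ := hxy
  cases q with
  | nil => rfl
  | cons hadj q' =>
    rcases hadj.2 with h | h | h
    · exact absurd h hxr
    · subst h
      exact absurd hadj.reachable (hc' x hx)
    · exact absurd hxB h.1

/-- The components of the pruned graph minus `r` that are isomorphic to a rooted tree with at least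
two vertices are exactly the branches outside `B` of this isomorphism type. -/
theorem rootedCount_prune (hp : IsParentMap K r p h) (hρ : IsTopMap K r ρ) {k : ℕ} (hk : 2 ≤ k)
    (T : SimpleGraph (Fin k)) (t : Fin k) :
    rootedCount (prune K r ρ B) r {v : V | v ≠ r} T t =
      Nat.card {u : V // K.Adj r u ∧ u ∉ B ∧
        ∃ (hu : u ∈ branch r ρ u) (φ : K.induce (branch r ρ u) ≃g T), φ ⟨u, hu⟩ = t} := by
  symm
  unfold rootedCount
  have hiso : ∀ (u : V) (hu : u ≠ r), K.Adj r u → u ∉ B →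
      ∃ ψ : ((prune K r ρ B).induce {v : V | v ≠ r}).induce
          (((prune K r ρ B).induce {v : V | v ≠ r}).connectedComponentMk ⟨u, hu⟩).supp ≃g
          K.induce (branch r ρ u), ∀ x, (ψ x : V) = x := by
    intro u hu hru huB
    have hsupp : ∀ x : {v : V | v ≠ r}, x ∈ (((prune K r ρ B).induce
        {v : V | v ≠ r}).connectedComponentMk ⟨u, hu⟩).supp ↔ ρ x = u := by
      intro x
      rw [SimpleGraph.ConnectedComponent.mem_supp_iff, SimpleGraph.ConnectedComponent.eq]
      refine ⟨fun hx => (top_eq_of_reachable hρ hx).trans (hρ.self u hru), fun hx => ?_⟩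
      exact hp.reachable_top hρ (prune_adj_parent hp hρ) x ⟨u, hu⟩ (hx ▸ huB) hx
    refine ⟨⟨⟨fun x => ⟨x.1.1, x.1.2, (hsupp _).1 x.2⟩,
      fun y => ⟨⟨y.1, y.2.1⟩, (hsupp _).2 y.2.2⟩, fun x => rfl, fun y => rfl⟩, ?_⟩, fun x => rfl⟩
    intro x y
    refine ⟨fun hxy => ⟨hxy, Or.inr (Or.inr ⟨?_, ?_⟩)⟩, fun hxy => hxy.1⟩
    · exact ((hsupp _).1 x.2).symm ▸ huB
    · exact ((hsupp _).1 y.2).symm ▸ huB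
  refine Nat.card_eq_of_bijective (fun u => ⟨((prune K r ρ B).induce
    {v : V | v ≠ r}).connectedComponentMk ⟨u.1, u.2.1.ne'⟩, ?_⟩) ⟨?_, ?_⟩
  · obtain ⟨u, hru, huB, hu, φ, hφ⟩ := u
    obtain ⟨ψ, hψ⟩ := hiso u hru.ne' hru huB
    refine ⟨⟨u, hru.ne'⟩, rfl, ψ.trans φ, ⟨hru, Or.inl rfl⟩, ?_⟩
    exact (congrArg φ (Subtype.ext (hψ _))).trans hφ
  · rintro ⟨u, hru, huB, hu⟩ ⟨u', hru', huB', hu'⟩ he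
    have := SimpleGraph.ConnectedComponent.exact (Subtype.ext_iff.1 he)
    have := top_eq_of_reachable hρ this
    rw [Subtype.mk.injEq, ← hρ.self u hru, ← hρ.self u' hru']
    exact this
  · rintro ⟨c, u, huc, φ, hru, hφ⟩
    have hru' : K.Adj r u := hru.1
    have hcu : ((prune K r ρ B).induce {v : V | v ≠ r}).connectedComponentMk u = c := huc
    subst hcu
    have huB : u.1 ∉ B := by
      intro huB
      -- a branch in `B` has been shattered into single vertices, too few to match `T`
      have : Subsingleton (((prune K r ρ B).induce
          {v : V | v ≠ r}).connectedComponentMk u).supp := by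
        have hall : ∀ x : (((prune K r ρ B).induce
            {v : V | v ≠ r}).connectedComponentMk u).supp, u = x.1 := fun x =>
          eq_of_reachable (SimpleGraph.ConnectedComponent.exact x.2).symm
            ((hρ.self u hru').symm ▸ huB)
        exact ⟨fun x y => Subtype.ext ((hall x).symm.trans (hall y))⟩
      have := φ.symm.injective (Subsingleton.elim (φ.symm ⟨0, by omega⟩) (φ.symm ⟨1, by omega⟩))
      simp at this
    obtain ⟨ψ, hψ⟩ := hiso u hru'.ne' hru' huB
    refine ⟨⟨u, hru', huB, ⟨hru'.ne', hρ.self u hru'⟩, ψ.symm.trans φ, ?_⟩, rfl⟩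
    have hψu : ψ ⟨u, huc⟩ = ⟨u.1, hru'.ne', hρ.self u hru'⟩ := Subtype.ext (hψ _)
    refine (congrArg φ ?_).trans hφ
    exact (congrArg ψ.symm hψu.symm).trans (ψ.symm_apply_apply _)

/-- Pruning removes at most one edge, the one to the parent, per vertex of a branch in `B`. -/
theorem card_edgeSet_le [Fintype V] (hp : IsParentMap K r p h) (hρ : IsTopMap K r ρ)
    (B : Finset V) {Δ : ℕ} (hB : ∀ u ∈ B, (branch r ρ u).ncard ≤ Δ) :
    Nat.card K.edgeSet ≤ Nat.card (prune K r ρ B).edgeSet + B.card * Δ := by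
  classical
  have hsub : K.edgeSet ⊆ (prune K r ρ B).edgeSet ∪
      (fun a => s(a, p a)) '' (⋃ u ∈ B, branch r ρ u) := by
    intro e he
    induction e using Sym2.ind with
    | _ a b =>
    rw [SimpleGraph.mem_edgeSet] at he
    by_cases hab : (prune K r ρ B).Adj a b
    · exact Or.inl hab
    right
    have hcond : a ≠ r ∧ b ≠ r ∧ ¬ (ρ a ∉ B ∧ ρ b ∉ B) := by
      have : ¬ (a = r ∨ b = r ∨ (ρ a ∉ B ∧ ρ b ∉ B)) := fun h => hab ⟨he, h⟩
      tauto
    obtain ⟨ha, hb, hρB⟩ := hcond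
    have hE := hρ.eq a b ha hb he
    rw [← hE, and_self, not_not] at hρB
    rcases ((hp.adj _ _).1 he).2 with h | h
    · exact ⟨a, Set.mem_biUnion (Finset.mem_coe.2 hρB) ⟨ha, rfl⟩, by simp [h]⟩
    · exact ⟨b, Set.mem_biUnion (Finset.mem_coe.2 hρB) ⟨hb, hE.symm⟩, by simp [h, Sym2.eq_swap]⟩
  rw [Nat.card_coe_set_eq, Nat.card_coe_set_eq]
  refine (Set.ncard_le_ncard hsub (Set.toFinite _)).trans ((Set.ncard_union_le _ _).trans ?_)
  refine Nat.add_le_add_left ((Set.ncard_image_le (Set.toFinite _)).trans ?_) _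
  exact (Finset.set_ncard_biUnion_le _ _).trans (Finset.sum_le_card_nsmul _ _ _ hB)

end prune

/-! ### The spanning subforest -/

/-- Let `ε ∈ (0,1)`, let `Δ` be a positive integer, let `K` be a tree with root `r`
such that every component of `K − r` has at most `Δ` vertices, let `d` be the degree of
`r` in `K`, and suppose `δ := ⌊εd/(Δ·C(2Δ,Δ))⌋ ≥ 1`.  Then `K` has a spanning subforest
`K'` containing every edge of `K` incident with `r` such that every component of `K'`
not containing `r` is a single vertex, in the component of `K'` containing `r` the
number of components of that component minus `r`, considered as trees rooted in the
neighbor of `r`, isomorphic to any fixed rooted tree `T` with at least two vertices is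
a multiple of `δ`, and `m(K) − m(K') ≤ εd`. -/
theorem exists_clean_spanning_subforest {V : Type*} [Fintype V]
    (ε : ℝ) (hε : ε ∈ Set.Ioo (0 : ℝ) 1) (Δ : ℕ) (hΔ : 0 < Δ)
    (K : SimpleGraph V) (r : V) (hK : K.IsTree)
    (hcomp : ∀ c : (K.induce {v : V | v ≠ r}).ConnectedComponent, Nat.card c.supp ≤ Δ)
    (d : ℕ) (hd : d = Nat.card (K.neighborSet r))
    (hδ : 1 ≤ ⌊ε * d / (Δ * (2 * Δ).choose Δ)⌋₊) :
    ∃ K' : SimpleGraph V, K' ≤ K ∧ (∀ v, K.Adj r v → K'.Adj r v) ∧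
      (∀ c : K'.ConnectedComponent, r ∉ c.supp → c.supp.Subsingleton) ∧
      (∀ (k : ℕ), 2 ≤ k → ∀ T : SimpleGraph (Fin k), T.IsTree → ∀ t : Fin k,
        ⌊ε * d / (Δ * (2 * Δ).choose Δ)⌋₊ ∣ rootedCount K' r {v : V | v ≠ r} T t) ∧
      (Nat.card K.edgeSet : ℝ) - Nat.card K'.edgeSet ≤ ε * d := by
  classical
  set δ := ⌊ε * d / (Δ * (2 * Δ).choose Δ)⌋₊ with hδdef
  obtain ⟨p, h, hp⟩ := exists_isParentMap K hK r
  obtain ⟨ρ, hρ⟩ := hp.exists_isTopMap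
  have hmem : ∀ u, K.Adj r u → u ∈ branch r ρ u := fun u hu => ⟨hu.ne', hρ.self u hu⟩
  have hbranch : ∀ u, K.Adj r u → Nat.card (branch r ρ u) ≤ Δ := by
    intro u hu
    refine le_trans ?_ (hcomp ((K.induce {v : V | v ≠ r}).connectedComponentMk ⟨u, hu.ne'⟩))
    refine Nat.card_le_card_of_injective (fun v => ⟨⟨v.1, v.2.1⟩,
      SimpleGraph.ConnectedComponent.sound ?_⟩) ?_
    · exact hp.reachable_top hρ (B := ∅) (fun a ha _ _ => hp.adj_parent ha) _ _
        (Set.notMem_empty _) v.2.2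
    · intro v v' hvv'
      exact Subtype.ext (congrArg (fun x => x.1.1) hvv')
  have hcode : ∀ u, ∃ f : Fin Δ →o Fin (Δ + 1), ∀ hu : K.Adj r u,
      IsCode (K.induce (branch r ρ u)) ⟨u, hmem u hu⟩ f := by
    intro u
    by_cases hu : K.Adj r u
    · obtain ⟨p', h', hp'⟩ := hp.branch hρ (hmem u hu) hu
      obtain ⟨f, hf⟩ := hp'.exists_isCode (hbranch u hu)
      exact ⟨f, fun _ => hf⟩
    · exact ⟨⟨fun _ => 0, fun _ _ _ => le_rfl⟩, fun hu' => absurd hu' hu⟩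
  choose code hcode using hcode
  have : Fintype (Fin Δ →o Fin (Δ + 1)) :=
    Fintype.ofInjective (fun f => (f : Fin Δ → Fin (Δ + 1))) DFunLike.coe_injective
  obtain ⟨B, hBN, hdvd, hBcard⟩ := exists_discard (K.neighborFinset r) code hδ
  have hBadj : ∀ u ∈ B, K.Adj r u := fun u hu => by simpa using hBN hu
  refine ⟨prune K r ρ B, prune_le, fun v hv => ⟨hv, Or.inl rfl⟩, prune_subsingleton hp hρ, ?_, ?_⟩
  · intro k hk T _ t
    rw [rootedCount_prune hp hρ hk]
    set Q : V → Prop := fun u => ∃ (hu : u ∈ branch r ρ u) (φ : K.induce (branch r ρ u) ≃g T),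
      φ ⟨u, hu⟩ = t with hQ
    have hcount : Nat.card {u : V // K.Adj r u ∧ u ∉ (B : Set V) ∧ Q u} =
        ((K.neighborFinset r \ B).filter Q).card := by
      rw [← Fintype.card_coe, ← Nat.card_eq_fintype_card]
      refine Nat.card_congr (Equiv.subtypeEquivRight fun u => ?_)
      simp [and_assoc]
    rw [hcount, Finset.card_eq_sum_card_fiberwise (f := code) (t := Finset.univ)
      (fun _ _ => Finset.mem_univ _)]
    refine Finset.dvd_sum fun f _ => ?_
    have htransfer : ∀ u u', K.Adj r u → K.Adj r u' → code u = f → code u' = f → Q u → Q u' := by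
      rintro u u' hu hu' rfl he ⟨_, φ, hφ⟩
      obtain ⟨ψ, hψ⟩ := (hcode u' hu').exists_iso (he ▸ hcode u hu)
      refine ⟨hmem u' hu', ψ.trans φ, ?_⟩
      rw [← hφ, ← hψ]
      rfl
    by_cases hex : ∃ u ∈ K.neighborFinset r \ B, code u = f ∧ Q u
    · obtain ⟨u, hu, huf, huQ⟩ := hex
      suffices hfib : ((K.neighborFinset r \ B).filter Q).filter (code · = f) =
          (K.neighborFinset r \ B).filter (code · = f) from hfib ▸ hdvd f
      rw [Finset.filter_filter]
      refine Finset.filter_congr fun u' hu' => ⟨fun h => h.2, fun h => ⟨?_, h⟩⟩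
      simp only [Finset.mem_sdiff, SimpleGraph.mem_neighborFinset] at hu hu'
      exact htransfer u u' hu.1 hu'.1 huf h huQ
    · rw [Finset.card_eq_zero.2]
      · exact dvd_zero _
      · rw [Finset.filter_filter]
        exact Finset.filter_eq_empty_iff.2 fun u hu h => hex ⟨u, hu, h.2, h.1⟩
  · have hedge := card_edgeSet_le hp hρ B (Δ := Δ) fun u hu => by
      rw [← Nat.card_coe_set_eq]
      exact hbranch u (hBadj u hu)
    have hcardF := card_orderHom_le Δ
    have hC : 0 < (2 * Δ).choose Δ := Nat.choose_pos (by omega)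
    have hnat : Nat.card K.edgeSet ≤
        Nat.card (prune K r ρ B).edgeSet + δ * (Δ * (2 * Δ).choose Δ) := by
      refine hedge.trans (Nat.add_le_add_left ?_ _)
      calc B.card * Δ ≤ (δ * (2 * Δ).choose Δ) * Δ :=
            Nat.mul_le_mul_right _ (hBcard.trans (Nat.mul_le_mul_left _ hcardF))
        _ = δ * (Δ * (2 * Δ).choose Δ) := by ring
    have hfloor : (δ : ℝ) ≤ ε * d / (Δ * (2 * Δ).choose Δ) :=
      Nat.floor_le (div_nonneg (mul_nonneg hε.1.le (Nat.cast_nonneg _)) (by positivity))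
    rw [le_div_iff₀ (by positivity)] at hfloor
    have hreal : (Nat.card K.edgeSet : ℝ) ≤
        Nat.card (prune K r ρ B).edgeSet + δ * (Δ * (2 * Δ).choose Δ) := by exact_mod_cast hnat
    linarith
end

section
/- Let ε ∈ (0,1) and let Δ be a positive integer with εΔ ≥ 1. Then every forest F has a spanning (ε,Δ)-clean subforest F' with m(F') ≥ (1 − 4(ε + 1/Δ))·m(F). -/
/-- `r` is a root witnessing `(ε,Δ)`-cleanness of the component `K` of the forest `F`:
(i) every component of `K − r` has at most `Δ` vertices, (ii) the degree of `r` in `F`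
lies in `D(ε,Δ) = {0,…,Δ} ∪ {⌈(1+ε)^i⌉ : i ∈ ℕ}`, and (iii) for every rooted tree `T`
with at least two vertices, the number of components of `K − r`, considered as trees
rooted in the neighbor of `r`, isomorphic to `T` as rooted trees is a multiple of
`max 1 ⌊ε·d_F(r)/(Δ·C(2Δ,Δ))⌋`. -/
def IsCleanRoot (ε : ℝ) (Δ : ℕ) {V : Type*} (F : SimpleGraph V)
    (K : F.ConnectedComponent) (r : V) : Prop :=
  r ∈ K.supp ∧
  (∀ c : (F.induce (K.supp \ {r})).ConnectedComponent, Nat.card c.supp ≤ Δ) ∧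
  (Nat.card (F.neighborSet r) ≤ Δ ∨
    ∃ i : ℕ, (Nat.card (F.neighborSet r) : ℤ) = ⌈(1 + ε) ^ i⌉) ∧
  (∀ (k : ℕ), 2 ≤ k → ∀ T : SimpleGraph (Fin k), T.IsTree → ∀ t : Fin k,
    max 1 ⌊ε * (Nat.card (F.neighborSet r)) / (Δ * (2 * Δ).choose Δ)⌋₊ ∣
      rootedCount F r (K.supp \ {r}) T t)

/-- A forest `F` is `(ε,Δ)`-clean if every connected component has a root vertex
witnessing the three cleanness conditions. -/
def IsClean (ε : ℝ) (Δ : ℕ) {V : Type*} (F : SimpleGraph V) : Prop :=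
  ∀ K : F.ConnectedComponent, ∃ r, IsCleanRoot ε Δ F K r

section CleanSubforest

open SimpleGraph
open scoped Classical

variable {V : Type*}

/-! ### Parent functions -/

/-- The forest with parent function `p`: each `v` with `p v ≠ v` is joined to `p v`, and
the fixed points of `p` are the roots. -/
def parentGraph (p : V → V) : SimpleGraph V where
  Adj u v := u ≠ v ∧ (p u = v ∨ p v = u)
  symm := ⟨fun _ _ h => ⟨h.1.symm, h.2.symm⟩⟩
  loopless := ⟨fun _ h => h.1 rfl⟩

/-- `h` strictly decreases along every non-trivial step to a parent, so `p` has no cycles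
apart from its fixed points. -/
def Ranked (p : V → V) (h : V → ℕ) : Prop := ∀ v, p v ≠ v → h (p v) < h v

/-- The descendants of `v`, including `v` itself. -/
def desc (p : V → V) (v : V) : Set V := {u | ∃ j : ℕ, p^[j] u = v}

/-- The parent function after deleting the edges from the vertices of `S` to their
parents; the vertices of `S` become roots. -/
noncomputable def cut (p : V → V) (S : Set V) (v : V) : V := if v ∈ S then v else p v

lemma self_mem_desc (p : V → V) (v : V) : v ∈ desc p v := ⟨0, rfl⟩

lemma mem_desc_of_parent {p : V → V} {u v : V} (hu : p u ∈ desc p v) : u ∈ desc p v := by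
  obtain ⟨j, hj⟩ := hu
  exact ⟨j + 1, hj⟩

lemma desc_cases {p : V → V} {u v : V} (hu : u ∈ desc p v) : u = v ∨ p u ∈ desc p v := by
  obtain ⟨j, hj⟩ := hu
  cases j with
  | zero => exact Or.inl hj
  | succ j => exact Or.inr ⟨j, hj⟩

lemma desc_induction {p : V → V} {v : V} {motive : V → Prop} (base : motive v)
    (step : ∀ u, p u ∈ desc p v → motive (p u) → motive u) : ∀ u ∈ desc p v, motive u := by
  rintro u ⟨j, hj⟩
  induction j generalizing u with
  | zero => exact (show u = v from hj) ▸ base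
  | succ j ih => exact step u ⟨j, hj⟩ (ih (p u) hj)

lemma desc_trans {p : V → V} {u v w : V} (hu : u ∈ desc p v) (hv : v ∈ desc p w) :
    u ∈ desc p w :=
  desc_induction (motive := fun u => u ∈ desc p w) hv (fun _ _ h => mem_desc_of_parent h) u hu

lemma parent_mem_desc_root {p : V → V} {u r : V} (hr : p r = r) (hu : u ∈ desc p r) :
    p u ∈ desc p r := by
  rcases desc_cases hu with rfl | h
  · rw [hr]; exact self_mem_desc _ _
  · exact h

lemma eq_of_root_mem_desc {p : V → V} {r v : V} (hr : p r = r) (h : r ∈ desc p v) : r = v := by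
  obtain ⟨j, hj⟩ := h
  rwa [Function.iterate_fixed hr] at hj

lemma root_unique {p : V → V} {r r' u : V} (hr : p r = r) (hr' : p r' = r')
    (h : u ∈ desc p r) (h' : u ∈ desc p r') : r = r' := by
  revert h'
  refine desc_induction (motive := fun u => u ∈ desc p r' → r = r') ?_ ?_ u h
  · exact fun h => eq_of_root_mem_desc hr h
  · exact fun u _ ih hu => ih (parent_mem_desc_root hr' hu)

/-- The branches hanging at the roots are pairwise disjoint. -/
lemma kid_unique {p : V → V} {c c' u : V} (hc : p (p c) = p c) (hc1 : p c ≠ c)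
    (hc' : p (p c') = p c') (hc1' : p c' ≠ c') (h : u ∈ desc p c) (h' : u ∈ desc p c') :
    c = c' := by
  revert h'
  refine desc_induction (motive := fun u => u ∈ desc p c' → c = c') ?_ ?_ u h
  · intro h
    rcases desc_cases h with h | h
    · exact h
    · exact absurd hc (by rw [eq_of_root_mem_desc hc h]; exact hc1')
  · intro u hu ih h
    rcases desc_cases h with rfl | h
    · exact absurd hc' (by rw [eq_of_root_mem_desc hc' hu]; exact hc1)
    · exact ih h

lemma exists_root {p : V → V} {h : V → ℕ} (hp : Ranked p h) (v : V) :
    ∃ r, p r = r ∧ v ∈ desc p r := by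
  induction hn : h v using Nat.strong_induction_on generalizing v with
  | _ n ih =>
    by_cases hv : p v = v
    · exact ⟨v, hv, self_mem_desc _ _⟩
    · obtain ⟨r, hr, hr'⟩ := ih _ (hn ▸ hp v hv) (p v) rfl
      exact ⟨r, hr, mem_desc_of_parent hr'⟩

lemma rank_le_of_mem_desc {p : V → V} {h : V → ℕ} (hp : Ranked p h) {u v : V}
    (hu : u ∈ desc p v) : h v ≤ h u := by
  refine desc_induction (motive := fun u => h v ≤ h u) le_rfl ?_ u hu
  intro u _ ih
  by_cases hv : p u = u
  · rwa [hv] at ih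
  · exact ih.trans (hp u hv).le

lemma Ranked.cut {p : V → V} {h : V → ℕ} (hp : Ranked p h) (S : Set V) :
    Ranked (cut p S) h := by
  intro v hv
  unfold _root_.cut at hv ⊢
  split_ifs at hv ⊢ with hS
  · exact absurd rfl hv
  · exact hp v hv

lemma cut_ne {p : V → V} {S : Set V} {v : V} : cut p S v ≠ v ↔ v ∉ S ∧ p v ≠ v := by
  unfold cut
  split_ifs with hS <;> simp [hS]

lemma cut_eq_of_ne {p : V → V} {S : Set V} {v : V} (hv : cut p S v ≠ v) :
    cut p S v = p v := by
  unfold cut; rw [if_neg (cut_ne.1 hv).1]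

lemma cut_of_root {p : V → V} {S : Set V} {r : V} (hr : p r = r) : cut p S r = r := by
  unfold cut; split_ifs <;> simp [hr]

lemma desc_cut_subset (p : V → V) (S : Set V) (v : V) : desc (cut p S) v ⊆ desc p v := by
  refine desc_induction (motive := fun u => u ∈ desc p v) (self_mem_desc _ _) ?_
  intro u _ ih
  by_cases hu : cut p S u = u
  · rwa [hu] at ih
  · rw [cut_eq_of_ne hu] at ih
    exact mem_desc_of_parent ih

lemma parentGraph_cut_le (p : V → V) (S : Set V) : parentGraph (cut p S) ≤ parentGraph p := by
  rintro u v ⟨hne, h⟩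
  refine ⟨hne, h.imp ?_ ?_⟩ <;> rintro rfl
  · exact (cut_eq_of_ne hne.symm).symm
  · exact (cut_eq_of_ne hne).symm

lemma card_edgeSet_parentGraph {p : V → V} {h : V → ℕ} (hp : Ranked p h) :
    Nat.card (parentGraph p).edgeSet = {v | p v ≠ v}.ncard := by
  rw [← Nat.card_coe_set_eq]
  symm
  refine Nat.card_eq_of_bijective
    (fun v : {v | p v ≠ v} => (⟨s(v.1, p v.1), ⟨Ne.symm v.2, Or.inl rfl⟩⟩ :
      (parentGraph p).edgeSet)) ⟨?_, ?_⟩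
  · rintro ⟨v, hv⟩ ⟨w, hw⟩ h'
    rw [Subtype.mk.injEq]
    rcases Sym2.eq_iff.1 (congrArg Subtype.val h') with h' | ⟨h1, h2⟩
    · exact h'.1
    · have h1 : v = p w := h1
      have h2 : p v = w := h2
      have a := hp v hv
      have b := hp w hw
      rw [← h1] at b
      rw [h2] at a
      omega
  · rintro ⟨e, he⟩
    induction e using Sym2.ind with
    | _ x y =>
      obtain ⟨hne, he⟩ : x ≠ y ∧ (p x = y ∨ p y = x) := he
      rcases he with rfl | rfl
      · exact ⟨⟨x, hne.symm⟩, rfl⟩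
      · exact ⟨⟨y, hne⟩, Subtype.ext Sym2.eq_swap⟩

lemma reachable_of_mem_desc {p : V → V} {u v : V} (hu : u ∈ desc p v) :
    (parentGraph p).Reachable v u := by
  refine desc_induction (motive := fun u => (parentGraph p).Reachable v u)
    (Reachable.refl _) ?_ u hu
  intro u _ ih
  by_cases h : p u = u
  · rwa [h] at ih
  · exact ih.trans (Adj.reachable ⟨h, Or.inr rfl⟩)

lemma supp_root {p : V → V} {r : V} (hr : p r = r) :
    ((parentGraph p).connectedComponentMk r).supp = desc p r := by
  ext u
  rw [ConnectedComponent.mem_supp_iff, ConnectedComponent.eq]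
  refine ⟨?_, fun h => (reachable_of_mem_desc h).symm⟩
  rintro ⟨w⟩
  induction w with
  | nil => exact self_mem_desc _ _
  | cons h w ih =>
    have ih := ih hr
    obtain ⟨_, rfl | rfl⟩ := h
    · exact mem_desc_of_parent ih
    · exact parent_mem_desc_root hr ih

lemma desc_kid_subset {p : V → V} {r c : V} (hr : p r = r) (hc : p c = r) (hcr : c ≠ r) :
    desc p c ⊆ desc p r \ {r} := by
  intro u hu
  refine ⟨desc_trans hu (mem_desc_of_parent (hc ▸ self_mem_desc _ _)), ?_⟩
  rintro rfl
  exact hcr (eq_of_root_mem_desc hr hu).symm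

/-- The component of `K − r` containing the child `c` of the root `r` consists of the
descendants of `c`. -/
lemma supp_kid {p : V → V} {r c : V} (hr : p r = r) (hc : p c = r) (hcr : c ≠ r)
    (hm : c ∈ desc p r \ {r}) (w : ↑(desc p r \ {r})) :
    w ∈ (((parentGraph p).induce (desc p r \ {r})).connectedComponentMk ⟨c, hm⟩).supp ↔
      w.1 ∈ desc p c := by
  rw [ConnectedComponent.mem_supp_iff, ConnectedComponent.eq]
  constructor
  · rintro ⟨w⟩
    generalize hx : (⟨c, hm⟩ : ↑(desc p r \ {r})) = x at w
    induction w with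
    | nil => subst hx; exact self_mem_desc _ _
    | @cons a b _ h w ih =>
      have ih := ih hx
      obtain ⟨_, h | h⟩ := h
      · simp only [Function.Embedding.subtype_apply] at h
        rw [← h] at ih
        exact mem_desc_of_parent ih
      · simp only [Function.Embedding.subtype_apply] at h
        rcases desc_cases ih with h' | h'
        · exact absurd (h.symm.trans (h' ▸ hc)) a.2.2
        · rwa [h] at h'
  · intro hw
    have key : ∀ u (hu : u ∈ desc p c), ((parentGraph p).induce (desc p r \ {r})).Reachable
        ⟨u, desc_kid_subset hr hc hcr hu⟩ ⟨c, hm⟩ := by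
      intro u hu
      refine desc_induction (motive := fun u => ∀ hu : u ∈ desc p r \ {r},
        ((parentGraph p).induce (desc p r \ {r})).Reachable ⟨u, hu⟩ ⟨c, hm⟩) ?_ ?_ u hu _
      · exact fun _ => Reachable.refl _
      · intro u hpu ih hu
        have ih := ih (desc_kid_subset hr hc hcr hpu)
        by_cases h : p u = u
        · simpa only [h] using ih
        · refine Reachable.trans (Adj.reachable ?_) ih
          exact ⟨fun e => h e.symm, Or.inl rfl⟩
    exact key _ hw

lemma exists_kid {p : V → V} {r u : V} (hu : u ∈ desc p r \ {r}) :
    ∃ c, p c = r ∧ c ≠ r ∧ u ∈ desc p c := by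
  obtain ⟨hu, hur⟩ := hu
  revert hur
  refine desc_induction (motive := fun u => u ∉ ({r} : Set V) → ∃ c, p c = r ∧ c ≠ r ∧ u ∈ desc p c)
    (fun h => absurd rfl h) ?_ u hu
  intro u _ ih hur
  by_cases h : p u = r
  · exact ⟨u, h, hur, self_mem_desc _ _⟩
  · obtain ⟨c, h1, h2, h3⟩ := ih h
    exact ⟨c, h1, h2, mem_desc_of_parent h3⟩

lemma exists_parent_function (F : SimpleGraph V) (hF : F.IsAcyclic) :
    ∃ (p : V → V) (h : V → ℕ), Ranked p h ∧ F = parentGraph p := by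
  let ρ : V → V := fun v => (F.connectedComponentMk v).out
  have hρ : ∀ v, F.Reachable v (ρ v) := fun v =>
    (ConnectedComponent.exact (Quot.out_eq (F.connectedComponentMk v))).symm
  have hρe : ∀ u v, F.Reachable u v → ρ u = ρ v := fun u v h => by
    simp only [ρ, ConnectedComponent.sound h]
  have step : ∀ v, ∃ w, (w = v ∧ ρ v = v) ∨ (F.Adj v w ∧ F.dist w (ρ w) < F.dist v (ρ v)) := by
    intro v
    obtain ⟨w, hw⟩ := (hρ v).exists_walk_length_eq_dist
    generalize hx : ρ v = x at w hw
    cases w with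
    | nil => exact ⟨v, Or.inl ⟨rfl, rfl⟩⟩
    | @cons _ y _ h w =>
      refine ⟨y, Or.inr ⟨h, ?_⟩⟩
      rw [← hρe v y h.reachable, hx, ← hw]
      exact lt_of_le_of_lt (dist_le w) (by simp)
  choose p hp using step
  have hrank : Ranked p (fun v => F.dist v (ρ v)) := by
    intro v hv
    rcases hp v with h | h
    · exact absurd h.1 hv
    · exact h.2
  have hle : parentGraph p ≤ F := by
    have : ∀ v, p v ≠ v → F.Adj v (p v) := by
      intro v hv
      rcases hp v with h | h
      · exact absurd h.1 hv
      · exact h.1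
    rintro u v ⟨hne, rfl | rfl⟩
    · exact this u hne.symm
    · exact (this v hne).symm
  refine ⟨p, _, hrank, le_antisymm ?_ hle⟩
  intro u v huv
  by_contra hn
  -- an edge outside `parentGraph p` is not a bridge: its ends share the root of their component
  refine isBridge_iff.1 (isAcyclic_iff_forall_adj_isBridge.1 hF huv) ?_
  have hroot : ∀ v, (parentGraph p).Reachable (ρ v) v := by
    intro v
    obtain ⟨r, hr, hv⟩ := exists_root hrank v
    have h1 := reachable_of_mem_desc hv
    rcases hp r with h | h
    · rw [← hρe _ _ (h1.mono hle), h.2]; exact h1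
    · exact absurd hr.symm h.1.ne
  have h := (hroot u).symm.trans ((hρe u v huv.reachable) ▸ hroot v)
  refine h.mono ?_
  intro a b hab
  rw [deleteEdges_adj]
  refine ⟨hle hab, ?_⟩
  rintro (h : s(a, b) = s(u, v))
  rcases Sym2.eq_iff.1 h with ⟨rfl, rfl⟩ | ⟨rfl, rfl⟩
  · exact hn hab
  · exact hn hab.symm

/-! ### Cutting off large subtrees -/

lemma desc_cut_congr {p : V → V} {h : V → ℕ} (hp : Ranked p h) {S S' : Set V} {v : V}
    (hS : ∀ u, h v < h u → (u ∈ S ↔ u ∈ S')) : desc (cut p S) v ⊆ desc (cut p S') v := by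
  refine desc_induction (motive := fun u => u ∈ desc (cut p S') v) (self_mem_desc _ _) ?_
  intro u hu ih
  by_cases hne : cut p S u = u
  · rwa [hne] at ih
  · have h1 := rank_le_of_mem_desc (hp.cut S) hu
    have h2 := (hp.cut S) u hne
    have h3 : u ∉ S' := fun h => (cut_ne.1 hne).1 ((hS u (by omega)).2 h)
    refine mem_desc_of_parent ?_
    rw [cut_eq_of_ne hne] at ih
    rwa [cut, if_neg h3]

/-- A vertex is cut from its parent exactly when more than `Δ` descendants are still
attached to it; this determines `S` from the leaves upwards. -/
lemma exists_heavy_set [Finite V] {p : V → V} {h : V → ℕ} (hp : Ranked p h) (Δ : ℕ) :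
    ∃ S : Set V, ∀ v, v ∈ S ↔ Δ < (desc (cut p S) v).ncard := by
  obtain ⟨H, hH⟩ : ∃ H, ∀ v, h v ≤ H := by
    obtain ⟨H, hH⟩ := (Set.finite_range h).bddAbove
    exact ⟨H, fun v => hH ⟨v, rfl⟩⟩
  have key : ∀ n, ∃ S : Set V, ∀ v, H < h v + n → (v ∈ S ↔ Δ < (desc (cut p S) v).ncard) := by
    intro n
    induction n with
    | zero => exact ⟨∅, fun v hv => absurd (hH v) (by omega)⟩
    | succ n ih =>
      obtain ⟨S, hS⟩ := ih
      let S' : Set V := {v | if H < h v + n then v ∈ S else Δ < (desc (cut p S) v).ncard}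
      have hSS' : ∀ u, H < h u + n → (u ∈ S ↔ u ∈ S') := by
        intro u hu
        simp only [S', Set.mem_ofPred_eq, if_pos hu]
      refine ⟨S', fun v hv => ?_⟩
      have e : desc (cut p S') v = desc (cut p S) v :=
        (desc_cut_congr hp fun u hu => (hSS' u (by omega)).symm).antisymm
          (desc_cut_congr hp fun u hu => hSS' u (by omega))
      rw [e]
      by_cases hvn : H < h v + n
      · rw [← hSS' v hvn, hS v hvn]
      · simp only [S', Set.mem_ofPred_eq, if_neg hvn]
  obtain ⟨S, hS⟩ := key (H + 1)
  exact ⟨S, fun v => hS v (by omega)⟩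

/-- Cutting at most `m/Δ` edges makes every branch at a root have at most `Δ` vertices:
each cut vertex keeps at least `Δ` edges in the tree below it. -/
lemma exists_small_branches [Fintype V] {p : V → V} {h : V → ℕ} (hp : Ranked p h) (Δ : ℕ) :
    ∃ S : Set V, (∀ v, cut p S v ≠ v → (desc (cut p S) v).ncard ≤ Δ) ∧
      S.ncard * Δ ≤ {v | cut p S v ≠ v}.ncard := by
  obtain ⟨S, hS⟩ := exists_heavy_set hp Δ
  refine ⟨S, fun v hv => not_lt.1 fun h => (cut_ne.1 hv).1 ((hS v).2 h), ?_⟩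
  have hfix : ∀ v ∈ S, cut p S v = v := fun v hv => by simp [cut, hv]
  let D : V → Finset V := fun v => (desc (cut p S) v \ {v}).toFinset
  have hD : ∀ v ∈ S, Δ ≤ (D v).card := by
    intro v hv
    have h1 := (hS v).1 hv
    have h2 := Set.ncard_sdiff_singleton_add_one (self_mem_desc (cut p S) v)
    simp only [D, ← Set.ncard_eq_toFinset_card']
    omega
  have hdisj : (S.toFinset : Set V).PairwiseDisjoint D := by
    intro v hv w hw hvw
    refine Finset.disjoint_left.2 fun u hu hu' => hvw ?_
    simp only [D, Set.mem_toFinset, Set.coe_toFinset] at hu hu' hv hw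
    exact root_unique (hfix v hv) (hfix w hw) hu.1 hu'.1
  calc S.ncard * Δ = ∑ _v ∈ S.toFinset, Δ := by
        rw [Finset.sum_const, smul_eq_mul, Set.ncard_eq_toFinset_card']
    _ ≤ ∑ v ∈ S.toFinset, (D v).card :=
        Finset.sum_le_sum fun v hv => hD v (Set.mem_toFinset.1 hv)
    _ = (S.toFinset.biUnion D).card := (Finset.card_biUnion hdisj).symm
    _ ≤ {v | cut p S v ≠ v}.ncard := by
        rw [Set.ncard_eq_toFinset_card']
        refine Finset.card_le_card fun u hu => ?_
        simp only [D, Finset.mem_biUnion, Set.mem_toFinset] at hu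
        obtain ⟨v, hv, hu, huv⟩ := hu
        simp only [Set.mem_toFinset, Set.mem_ofPred_eq]
        exact fun e => huv (eq_of_root_mem_desc e hu)

lemma ncard_cut [Finite V] (p : V → V) (S : Set V) :
    {v | p v ≠ v}.ncard ≤ {v | cut p S v ≠ v}.ncard + S.ncard := by
  refine (Set.ncard_le_ncard ?_).trans (Set.ncard_union_le _ _)
  intro v hv
  by_cases h : v ∈ S
  · exact Or.inr h
  · exact Or.inl (cut_ne.2 ⟨h, hv⟩)

/-! ### Selecting the edges to delete at a root -/

/-- Given the branches `C` at a root and their codes, `A` is a set of branches to be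
detached so that the degree becomes admissible, and `B` a set of branches to be replaced by
single leaves so that every code class becomes divisible. -/
lemma exists_selection {X : Type*} [Fintype X] (ε : ℝ) (hε0 : 0 < ε) (Δ M : ℕ)
    (hΔ : 0 < Δ) (hM : 0 < M) (hX : Fintype.card X ≤ M) (C : Finset V) (code : V → X) :
    ∃ A B : Finset V, A ⊆ C ∧ B ⊆ C ∧
      ((C \ A).card ≤ Δ ∨ ∃ i : ℕ, ((C \ A).card : ℤ) = ⌈(1 + ε) ^ i⌉) ∧
      (∀ x, max 1 ⌊ε * (C \ A).card / (Δ * M)⌋₊ ∣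
        {c ∈ (C \ A) \ B | code c = x}.card) ∧
      (A.card + B.card * Δ : ℝ) ≤ 2 * ε * C.card := by
  have hΔ' : (0 : ℝ) < Δ := by exact_mod_cast hΔ
  have hM' : (0 : ℝ) < M := by exact_mod_cast hM
  -- the divisibility part depends only on `A`
  have hB : ∀ A ⊆ C, ∃ B ⊆ C, (∀ x, max 1 ⌊ε * (C \ A).card / (Δ * M)⌋₊ ∣
        {c ∈ (C \ A) \ B | code c = x}.card) ∧ (B.card * Δ : ℝ) ≤ ε * (C \ A).card := by
    intro A _
    set q := max 1 ⌊ε * (C \ A).card / (Δ * M)⌋₊ with hq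
    have hq0 : 0 < q := by omega
    have hx : ∀ x, ∃ t ⊆ {c ∈ C \ A | code c = x}, t.card = {c ∈ C \ A | code c = x}.card % q :=
      fun x => Finset.exists_subset_card_eq (Nat.mod_le _ _)
    choose t ht htc using hx
    refine ⟨Finset.univ.biUnion t, ?_, ?_, ?_⟩
    · intro c hc
      obtain ⟨x, -, hc⟩ := Finset.mem_biUnion.1 hc
      exact (Finset.mem_sdiff.1 (Finset.mem_filter.1 (ht x hc)).1).1
    · intro x
      have : {c ∈ (C \ A) \ Finset.univ.biUnion t | code c = x} =
          {c ∈ C \ A | code c = x} \ t x := by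
        ext c
        simp only [Finset.mem_filter, Finset.mem_sdiff, Finset.mem_biUnion, Finset.mem_univ,
          true_and, not_exists]
        constructor
        · rintro ⟨⟨h1, h2⟩, h3⟩
          exact ⟨⟨h1, h3⟩, h2 x⟩
        · rintro ⟨⟨h1, h2⟩, h3⟩
          refine ⟨⟨h1, fun y hy => ?_⟩, h2⟩
          have := (Finset.mem_filter.1 (ht y hy)).2
          exact h3 (by rwa [← h2, this])
      rw [this, Finset.card_sdiff_of_subset (ht x), htc x]
      exact Nat.dvd_sub_mod _
    · have h1 : (Finset.univ.biUnion t).card ≤ M * (q - 1) := by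
        refine Finset.card_biUnion_le.trans ((Finset.sum_le_card_nsmul _ _ (q - 1) ?_).trans ?_)
        · intro x _
          rw [htc]
          have := Nat.mod_lt {c ∈ C \ A | code c = x}.card hq0
          omega
        · rw [smul_eq_mul]
          exact Nat.mul_le_mul_right _ hX
      have h2 : ((q - 1 : ℕ) : ℝ) ≤ ε * (C \ A).card / (Δ * M) := by
        refine le_trans ?_ (Nat.floor_le (by positivity))
        exact_mod_cast (by omega : q - 1 ≤ ⌊ε * (C \ A).card / (Δ * M)⌋₊)
      calc ((Finset.univ.biUnion t).card * Δ : ℝ) ≤ (M * (q - 1 : ℕ)) * Δ := by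
            gcongr; exact_mod_cast h1
        _ ≤ (M * (ε * (C \ A).card / (Δ * M))) * Δ := by gcongr
        _ = ε * (C \ A).card := by field_simp
  obtain ⟨A, hA, hdeg, hAc⟩ : ∃ A ⊆ C,
      ((C \ A).card ≤ Δ ∨ ∃ i : ℕ, ((C \ A).card : ℤ) = ⌈(1 + ε) ^ i⌉) ∧
      (A.card : ℝ) ≤ ε * C.card := by
    by_cases hC : C.card = 0
    · exact ⟨∅, by simp, Or.inl (by simp [hC]), by simp [hC]⟩
    have hC1 : (1 : ℝ) ≤ C.card := by exact_mod_cast Nat.one_le_iff_ne_zero.2 hC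
    obtain ⟨i, hi1, hi2⟩ := exists_nat_pow_near hC1 (by linarith : 1 < 1 + ε)
    have hle : ⌈(1 + ε) ^ i⌉₊ ≤ C.card := Nat.ceil_le.2 hi1
    obtain ⟨A, hA, hAc⟩ := Finset.exists_subset_card_eq (Nat.sub_le C.card ⌈(1 + ε) ^ i⌉₊)
    refine ⟨A, hA, Or.inr ⟨i, ?_⟩, ?_⟩
    · rw [Finset.card_sdiff_of_subset hA, hAc, Nat.sub_sub_self hle]
      exact Int.natCast_ceil_eq_ceil (by positivity)
    · rw [hAc, Nat.cast_sub hle]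
      have := Nat.le_ceil ((1 + ε) ^ i)
      rw [pow_succ] at hi2
      nlinarith
  obtain ⟨B, hBC, hdiv, hBc⟩ := hB A hA
  refine ⟨A, B, hA, hBC, hdeg, hdiv, ?_⟩
  have : ((C \ A).card : ℝ) ≤ C.card := by
    exact_mod_cast Finset.card_le_card Finset.sdiff_subset
  nlinarith

/-! ### Breadth-first codes of rooted trees -/

/-- The rooted trees formed by the descendants of `c` and of `c'` are isomorphic. -/
def BranchIso (p : V → V) (c c' : V) : Prop :=
  ∃ φ : V → V, Set.BijOn φ (desc p c) (desc p c') ∧ φ c = c' ∧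
    ∀ u ∈ desc p c, u ≠ c → φ (p u) = p (φ u)

/-- The key of a vertex, written in base `N`, lists the labels `a v < N` of its ancestors
from the root downwards. Dividing by `N` passes to the key of the parent, so ordering by keys is a
breadth-first order in which parents are monotone. -/
noncomputable def bfsKey {p : V → V} {h : V → ℕ} (hp : Ranked p h) (N : ℕ) (a : V → ℕ)
    (v : V) : ℕ :=
  if _ : p v = v then a v else N * bfsKey hp N a (p v) + a v
termination_by h v
decreasing_by exact hp v ‹_›

/-- The descendants of `c` can be numbered by `0, 1, …` starting at `c` such that parents
depend monotonically on the number. -/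
lemma exists_bfs [Finite V] {p : V → V} {h : V → ℕ} (hp : Ranked p h) (c : V) :
    ∃ e : V → ℕ, Set.BijOn e (desc p c) (Set.Iio (desc p c).ncard) ∧ e c = 0 ∧
      ∀ u ∈ desc p c, ∀ v ∈ desc p c, u ≠ c → v ≠ c → e u ≤ e v → e (p u) ≤ e (p v) := by
  obtain ⟨N, ⟨a⟩⟩ := Finite.exists_equiv_fin V
  let κ := bfsKey hp N (fun v => (a v : ℕ))
  have hN : 0 < N := (a c).pos
  have hκ : ∀ v, p v ≠ v → κ v = N * κ (p v) + a v := by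
    intro v hv
    simp only [κ]
    rw [bfsKey, dif_neg hv]
  have hmod : ∀ v, κ v % N = a v := by
    intro v
    by_cases hv : p v = v
    · simp only [κ]
      rw [bfsKey, dif_pos hv, Nat.mod_eq_of_lt (a v).2]
    · rw [hκ v hv, Nat.mul_add_mod, Nat.mod_eq_of_lt (a v).2]
  have hinj : Function.Injective κ := fun u v huv =>
    a.injective (Fin.ext (by rw [← hmod, ← hmod, huv]))
  have hdiv : ∀ v, p v ≠ v → κ (p v) = κ v / N := by
    intro v hv
    rw [hκ v hv, Nat.mul_add_div hN, Nat.div_eq_of_lt (a v).2, add_zero]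
  have hne : ∀ u ∈ desc p c, u ≠ c → p u ≠ u := fun u hu huc e =>
    huc (eq_of_root_mem_desc e hu)
  have hc : ∀ u ∈ desc p c, κ c ≤ κ u := by
    refine desc_induction le_rfl ?_
    intro u _ ih
    by_cases hu : p u = u
    · rwa [hu] at ih
    · exact ih.trans (by rw [hdiv u hu]; exact Nat.div_le_self _ _)
  let e : V → ℕ := fun u => {w ∈ desc p c | κ w < κ u}.ncard
  have hemono : ∀ u v, κ u ≤ κ v → e u ≤ e v := fun u v huv =>
    Set.ncard_le_ncard fun w hw => ⟨hw.1, hw.2.trans_le huv⟩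
  have hestrict : ∀ u ∈ desc p c, ∀ v, κ u < κ v → e u < e v := by
    intro u hu v huv
    refine Set.ncard_lt_ncard ⟨fun w hw => ⟨hw.1, hw.2.trans huv⟩, fun hs => ?_⟩
    exact lt_irrefl _ (hs (⟨hu, huv⟩ : u ∈ {w ∈ desc p c | κ w < κ v})).2
  have hmaps : Set.MapsTo e (desc p c) (Set.Iio (desc p c).ncard) := by
    intro u hu
    refine Set.ncard_lt_ncard ⟨fun w hw => hw.1, fun hs => ?_⟩
    exact lt_irrefl _ (hs hu).2
  have heinj : Set.InjOn e (desc p c) := by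
    intro u hu v hv huv
    rcases lt_trichotomy (κ u) (κ v) with h | h | h
    · exact absurd huv (hestrict u hu v h).ne
    · exact hinj h
    · exact absurd huv (hestrict v hv u h).ne'
  refine ⟨e, ⟨hmaps, heinj, ?_⟩, ?_, ?_⟩
  · have himg : e '' desc p c = Set.Iio (desc p c).ncard := by
      refine Set.eq_of_subset_of_ncard_le hmaps.image_subset ?_ (Set.finite_Iio _)
      rw [heinj.ncard_image, Set.ncard_eq_toFinset_card']
      simp
    exact himg.ge
  · refine (Set.ncard_eq_zero).2 (Set.eq_empty_of_forall_notMem fun w hw => ?_)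
    exact absurd hw.2 (not_lt.2 (hc w hw.1))
  · intro u hu v hv huc hvc huv
    have : κ u ≤ κ v := by
      by_contra hlt
      exact absurd huv (not_le.2 (hestrict v hv u (not_le.1 hlt)))
    refine hemono _ _ ?_
    rw [hdiv u (hne u hu huc), hdiv v (hne v hv hvc)]
    exact Nat.div_le_div_right this

/-- The sequence of parents in a breadth-first numbering of a rooted tree with `k ≤ Δ`
vertices, continued by the value `Δ` at the positions `i ≥ k`, is monotone. -/
lemma exists_parent_sequence [Finite V] {p : V → V} {h : V → ℕ} (hp : Ranked p h) (Δ : ℕ)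
    (c : V) :
    ∃ f : {f : Fin Δ → Fin (Δ + 1) // Monotone f}, (desc p c).ncard ≤ Δ →
      ∃ e : V → ℕ, Set.BijOn e (desc p c) (Set.Iio (desc p c).ncard) ∧ e c = 0 ∧
      (∀ u ∈ desc p c, u ≠ c → ∀ i : Fin Δ, (i : ℕ) = e u → (f.1 i : ℕ) = e (p u)) ∧
      ∀ i : Fin Δ, (f.1 i : ℕ) < Δ ↔ (i : ℕ) < (desc p c).ncard := by
  by_cases hk : (desc p c).ncard ≤ Δ
  swap
  · exact ⟨⟨fun _ => 0, monotone_const⟩, fun h => absurd h hk⟩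
  obtain ⟨e, he, hec, hmono⟩ := exists_bfs hp c
  have : Nonempty V := ⟨c⟩
  set k := (desc p c).ncard with hkdef
  let inv := Function.invFunOn e (desc p c)
  have hinv : ∀ i < k, inv i ∈ desc p c ∧ e (inv i) = i := fun i hi =>
    ⟨Function.invFunOn_mem (he.surjOn hi), Function.invFunOn_eq (he.surjOn hi)⟩
  have hinvc : ∀ i < k, i ≠ 0 → inv i ≠ c := fun i hi hi0 e' =>
    hi0 (by rw [← (hinv i hi).2, e', hec])
  have hpar : ∀ u ∈ desc p c, u ≠ c → p u ∈ desc p c := fun u hu huc =>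
    (desc_cases hu).resolve_left huc
  let g : ℕ → ℕ := fun i => if i < k then (if i = 0 then 0 else e (p (inv i))) else Δ
  have hglt : ∀ i < k, g i < k := by
    intro i hi
    simp only [g, if_pos hi]
    split_ifs with h0
    · omega
    · exact he.mapsTo (hpar _ (hinv i hi).1 (hinvc i hi h0))
  have hgge : ∀ i, ¬ i < k → g i = Δ := fun i hi => by simp only [g, if_neg hi]
  have hgle : ∀ i, g i ≤ Δ := by
    intro i
    by_cases hi : i < k
    · exact (hglt i hi).le.trans hk
    · exact (hgge i hi).le
  have hgm : Monotone g := by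
    intro i j hij
    by_cases hj : j < k
    · have hi : i < k := hij.trans_lt hj
      by_cases hi0 : i = 0
      · simp only [g, if_pos hi, if_pos hi0]; exact Nat.zero_le _
      · have hj0 : j ≠ 0 := by omega
        simp only [g, if_pos hi, if_pos hj, if_neg hi0, if_neg hj0]
        refine hmono _ (hinv i hi).1 _ (hinv j hj).1 (hinvc i hi hi0) (hinvc j hj hj0) ?_
        rwa [(hinv i hi).2, (hinv j hj).2]
    · rw [hgge j hj]; exact hgle i
  refine ⟨⟨fun i => ⟨g i, Nat.lt_succ_of_le (hgle i)⟩, fun i j hij => hgm hij⟩, fun _ =>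
    ⟨e, he, hec, ?_, ?_⟩⟩
  · intro u hu huc i hi
    have hik : (i : ℕ) < k := by rw [hi]; exact he.mapsTo hu
    have hui : inv i = u := he.injOn (hinv i hik).1 hu (by rw [(hinv i hik).2, hi])
    have hi0 : (i : ℕ) ≠ 0 := by
      rw [hi, ← hec]
      exact fun e' => huc (he.injOn hu (self_mem_desc _ _) e')
    simp only [g, if_pos hik, if_neg hi0, hui]
  · intro i
    by_cases hi : (i : ℕ) < k
    · exact iff_of_true ((hglt i hi).trans_le hk) hi
    · exact iff_of_false (by simp [hgge i hi]) hi

lemma exists_code [Finite V] {p : V → V} {h : V → ℕ} (hp : Ranked p h) (Δ : ℕ) :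
    ∃ code : V → {f : Fin Δ → Fin (Δ + 1) // Monotone f}, ∀ c c',
      (desc p c).ncard ≤ Δ → (desc p c').ncard ≤ Δ → code c = code c' → BranchIso p c c' := by
  choose code hcode using exists_parent_sequence hp Δ
  refine ⟨code, fun c c' hc hc' hcc => ?_⟩
  obtain ⟨e, he, hec, hf, hk⟩ := hcode c hc
  obtain ⟨e', he', hec', hf', hk'⟩ := hcode c' hc'
  have : Nonempty V := ⟨c⟩
  rw [← hcc] at hf' hk'
  -- the size is recovered from the code as the number of values different from `Δ`
  have hkk : (desc p c).ncard = (desc p c').ncard := by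
    rcases lt_trichotomy (desc p c).ncard (desc p c').ncard with hlt | heq | hlt
    · have h1 := (hk' ⟨_, hlt.trans_le hc'⟩).2 hlt
      exact absurd ((hk _).1 h1) (lt_irrefl _)
    · exact heq
    · have h1 := (hk ⟨_, hlt.trans_le hc⟩).2 hlt
      exact absurd ((hk' _).1 h1) (lt_irrefl _)
  have hsurj : ∀ u ∈ desc p c, e u ∈ e' '' desc p c' := fun u hu =>
    he'.surjOn (by rw [← hkk]; exact he.mapsTo hu)
  let φ : V → V := fun u => Function.invFunOn e' (desc p c') (e u)
  have hφ : ∀ u ∈ desc p c, φ u ∈ desc p c' ∧ e' (φ u) = e u := fun u hu =>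
    ⟨Function.invFunOn_mem (hsurj u hu), Function.invFunOn_eq (hsurj u hu)⟩
  have hpar : ∀ c, ∀ u ∈ desc p c, u ≠ c → p u ∈ desc p c := fun c u hu huc =>
    (desc_cases hu).resolve_left huc
  refine ⟨φ, ⟨fun u hu => (hφ u hu).1, ?_, ?_⟩, ?_, ?_⟩
  · intro u hu v hv huv
    refine he.injOn hu hv ?_
    rw [← (hφ u hu).2, ← (hφ v hv).2, huv]
  · intro w hw
    obtain ⟨u, hu, huw⟩ := he.surjOn (by rw [hkk]; exact he'.mapsTo hw)
    exact ⟨u, hu, he'.injOn (hφ u hu).1 hw ((hφ u hu).2.trans huw)⟩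
  · have := hφ c (self_mem_desc _ _)
    exact he'.injOn this.1 (self_mem_desc _ _) (by rw [this.2, hec, hec'])
  · intro u hu huc
    have hu' := hφ u hu
    have huc' : φ u ≠ c' := by
      intro e1
      refine huc (he.injOn hu (self_mem_desc _ _) ?_)
      rw [← hu'.2, e1, hec, hec']
    have hpu := hφ _ (hpar c u hu huc)
    refine he'.injOn hpu.1 (hpar c' _ hu'.1 huc') ?_
    have hi : e u < Δ := lt_of_lt_of_le (he.mapsTo hu) hc
    rw [hpu.2, ← hf u hu huc ⟨_, hi⟩ rfl, hf' _ hu'.1 huc' ⟨_, hi⟩ hu'.2.symm]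

/-- A monotone `f` is determined by the `Δ`-element set `{f i + i}`. -/
lemma card_monotone_le (Δ : ℕ) :
    Fintype.card {f : Fin Δ → Fin (Δ + 1) // Monotone f} ≤ (2 * Δ).choose Δ := by
  let s : {f : Fin Δ → Fin (Δ + 1) // Monotone f} → Fin Δ → ℕ := fun f i => f.1 i + i
  have hs : ∀ f, StrictMono (s f) := fun f i j hij =>
    add_lt_add_of_le_of_lt (f.2 hij.le) hij
  have : Fintype.card {f : Fin Δ → Fin (Δ + 1) // Monotone f} ≤
      (Finset.powersetCard Δ (Finset.range (2 * Δ))).card := by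
    refine Finset.card_le_card_of_injOn (s := Finset.univ)
      (fun f => Finset.univ.image (s f)) ?_ ?_
    · intro f _
      refine Finset.mem_coe.2 (Finset.mem_powersetCard.2 ⟨?_, ?_⟩)
      · intro x hx
        obtain ⟨i, -, rfl⟩ := Finset.mem_image.1 hx
        have h1 := (f.1 i).2
        have h2 := i.2
        simp only [s, Finset.mem_range]
        omega
      · rw [Finset.card_image_of_injective _ (hs f).injective, Finset.card_univ, Fintype.card_fin]
    · intro f _ g _ hfg
      have h1 : Set.range (s f) = Set.range (s g) := by
        have := congrArg (fun t : Finset ℕ => (t : Set ℕ)) hfg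
        simpa using this
      have h2 := ((hs f).range_inj (hs g)).1 h1
      refine Subtype.ext (funext fun i => Fin.ext ?_)
      have := congrFun h2 i
      simp only [s] at this
      omega
  rwa [Finset.card_powersetCard, Finset.card_range] at this

/-! ### Cleanness in terms of the parent function -/

/-- The descendants of `c`, rooted at `c`, form the rooted tree `(T, t)`. -/
def HasShape (p : V → V) (c : V) {k : ℕ} (T : SimpleGraph (Fin k)) (t : Fin k) : Prop :=
  ∃ φ : (parentGraph p).induce (desc p c) ≃g T, φ ⟨c, self_mem_desc p c⟩ = t

/-- The children of a vertex. -/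
def kids (p : V → V) (r : V) : Set V := {c | p c = r ∧ c ≠ r}

lemma parent_notMem_desc {p : V → V} {r c : V} (hr : p r = r) (hc : c ∈ kids p r) :
    p c ∉ desc p c := by
  rw [hc.1]
  exact fun h => hc.2 (eq_of_root_mem_desc hr h).symm

lemma HasShape.congr {p : V → V} {c c' : V} (hc : p c ∉ desc p c) (hc' : p c' ∉ desc p c')
    (hiso : BranchIso p c c') {k : ℕ} {T : SimpleGraph (Fin k)} {t : Fin k}
    (h : HasShape p c T t) : HasShape p c' T t := by
  obtain ⟨φ, hφ, hφc, hφp⟩ := hiso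
  obtain ⟨ψ, hψ⟩ := h
  have key : ∀ u ∈ desc p c, ∀ v ∈ desc p c, p (φ u) = φ v ↔ p u = v := by
    intro u hu v hv
    by_cases huc : u = c
    · subst huc
      rw [hφc]
      exact iff_of_false (fun e => hc' (e ▸ hφ.mapsTo hv)) (fun e => hc (e ▸ hv))
    · rw [← hφp u hu huc]
      exact hφ.injOn.eq_iff ((desc_cases hu).resolve_left huc) hv
  let χ : (parentGraph p).induce (desc p c) ≃g (parentGraph p).induce (desc p c') :=
    { toEquiv := Set.BijOn.equiv φ hφ
      map_rel_iff' := by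
        rintro ⟨u, hu⟩ ⟨v, hv⟩
        change (φ u ≠ φ v ∧ (p (φ u) = φ v ∨ p (φ v) = φ u)) ↔ (u ≠ v ∧ (p u = v ∨ p v = u))
        rw [key u hu v hv, key v hv u hu, hφ.injOn.ne_iff hu hv] }
  refine ⟨χ.symm.trans ψ, ?_⟩
  have : χ.symm ⟨c', self_mem_desc p c'⟩ = ⟨c, self_mem_desc p c⟩ := by
    rw [RelIso.symm_apply_eq]
    exact Subtype.ext hφc.symm
  rw [RelIso.trans_apply, this, hψ]

lemma neighborSet_root {p : V → V} {r : V} (hr : p r = r) :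
    (parentGraph p).neighborSet r = kids p r := by
  ext c
  constructor
  · rintro ⟨hne, h | h⟩
    · exact absurd (hr.symm.trans h) hne
    · exact ⟨h, hne.symm⟩
  · rintro ⟨h, hne⟩
    exact ⟨hne.symm, Or.inr h⟩

/-- A component with the same vertices as a branch induces the same rooted tree. -/
def suppIso (p : V → V) {S : Set V} (C : ((parentGraph p).induce S).ConnectedComponent) (c : V)
    (hS : desc p c ⊆ S) (hC : ∀ w, w ∈ C.supp ↔ w.1 ∈ desc p c) :
    ((parentGraph p).induce S).induce C.supp ≃g (parentGraph p).induce (desc p c) where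
  toFun x := ⟨x.1.1, (hC _).1 x.2⟩
  invFun x := ⟨⟨x.1, hS x.2⟩, (hC _).2 x.2⟩
  left_inv _ := rfl
  right_inv _ := rfl
  map_rel_iff' := Iff.rfl

lemma rootedCount_eq {p : V → V} {r : V} (hr : p r = r) {k : ℕ} (T : SimpleGraph (Fin k))
    (t : Fin k) : rootedCount (parentGraph p) r (desc p r \ {r}) T t =
      {c ∈ kids p r | HasShape p c T t}.ncard := by
  have hm : ∀ c ∈ kids p r, c ∈ desc p r \ {r} := fun c hc =>
    desc_kid_subset hr hc.1 hc.2 (self_mem_desc p c)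
  have hC := fun c (hc : c ∈ kids p r) => supp_kid hr hc.1 hc.2 (hm c hc)
  rw [rootedCount, ← Nat.card_coe_set_eq]
  symm
  refine Nat.card_eq_of_bijective (fun c : {c ∈ kids p r | HasShape p c T t} =>
    ⟨((parentGraph p).induce (desc p r \ {r})).connectedComponentMk ⟨c.1, hm c.1 c.2.1⟩, ?_⟩)
    ⟨?_, ?_⟩
  · obtain ⟨c, hc, ψ, hψ⟩ := c
    refine ⟨⟨c, hm c hc⟩, rfl, (suppIso p _ c (desc_kid_subset hr hc.1 hc.2) (hC c hc)).trans ψ,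
      ⟨hc.2.symm, Or.inr hc.1⟩, ?_⟩
    exact hψ
  · rintro ⟨c, hc, _⟩ ⟨c', hc', _⟩ h
    have h1 := (Subtype.mk.inj h)
    have h2 : c ∈ desc p c' := (hC c' hc' ⟨c, hm c hc⟩).1 (h1 ▸ rfl)
    refine Subtype.ext (kid_unique (p := p) (u := c) ?_ ?_ ?_ ?_ (self_mem_desc p c) h2)
    · rw [hc.1, hr]
    · rw [hc.1]; exact hc.2.symm
    · rw [hc'.1, hr]
    · rw [hc'.1]; exact hc'.2.symm
  · rintro ⟨C, ⟨c, hcm⟩, hcC, φ, hadj, hφ⟩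
    have hc : c ∈ kids p r := by
      rw [← neighborSet_root hr]; exact hadj
    obtain rfl : ((parentGraph p).induce (desc p r \ {r})).connectedComponentMk ⟨c, hcm⟩ = C :=
      hcC
    exact ⟨⟨c, hc, (suppIso p _ c (desc_kid_subset hr hc.1 hc.2) (hC c hc)).symm.trans φ, hφ⟩,
      rfl⟩

lemma isClean_parentGraph [Finite V] {p : V → V} {h : V → ℕ} (hp : Ranked p h) {ε : ℝ} {Δ : ℕ}
    (hsmall : ∀ v, p v ≠ v → (desc p v).ncard ≤ Δ)
    (hdeg : ∀ r, p r = r → (kids p r).ncard ≤ Δ ∨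
      ∃ i : ℕ, ((kids p r).ncard : ℤ) = ⌈(1 + ε) ^ i⌉)
    (hdvd : ∀ r, p r = r → ∀ k, 2 ≤ k → ∀ (T : SimpleGraph (Fin k)) (t : Fin k),
      max 1 ⌊ε * (kids p r).ncard / (Δ * (2 * Δ).choose Δ)⌋₊ ∣
        {c ∈ kids p r | HasShape p c T t}.ncard) :
    IsClean ε Δ (parentGraph p) := by
  intro K
  obtain ⟨v, rfl⟩ := K.exists_rep
  obtain ⟨r, hr, hv⟩ := exists_root hp v
  have hsupp : ConnectedComponent.supp (Quot.mk (parentGraph p).Reachable v) = desc p r := by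
    rw [← supp_root hr]
    congr 1
    exact ConnectedComponent.sound (reachable_of_mem_desc hv).symm
  refine ⟨r, ?_⟩
  unfold IsCleanRoot
  rw [hsupp, neighborSet_root hr, Nat.card_coe_set_eq]
  refine ⟨self_mem_desc _ _, ?_, hdeg r hr, ?_⟩
  · intro C
    obtain ⟨u, rfl⟩ := C.exists_rep
    obtain ⟨c, hc, hcr, hu⟩ := exists_kid u.2
    have hm := desc_kid_subset hr hc hcr (self_mem_desc p c)
    have hC := supp_kid hr hc hcr hm
    have e : Quot.mk _ u = ((parentGraph p).induce (desc p r \ {r})).connectedComponentMk ⟨c, hm⟩ :=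
      (hC u).2 hu
    rw [e, Nat.card_congr (suppIso p _ c (desc_kid_subset hr hc hcr) hC).toEquiv,
      Nat.card_coe_set_eq]
    exact hsmall c (by rw [hc]; exact hcr.symm)
  · intro k hk T _ t
    rw [rootedCount_eq hr]
    exact hdvd r hr k hk T t

/-! ### Pruning the branches -/

lemma floor_eq_zero_of_small {ε : ℝ} (hε0 : 0 < ε) (hε1 : ε < 1) {Δ d M : ℕ} (hd : d ≤ Δ)
    (hM : 0 < M) : ⌊ε * d / (Δ * M)⌋₊ = 0 := by
  rw [Nat.floor_eq_zero]
  rcases Nat.eq_zero_or_pos Δ with rfl | hΔ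
  · simp
  have h1 : (1 : ℝ) ≤ M := by exact_mod_cast hM
  have h2 : (0 : ℝ) < Δ := by exact_mod_cast hΔ
  have h3 : (d : ℝ) ≤ Δ := by exact_mod_cast hd
  rw [div_lt_one (by positivity)]
  calc ε * d ≤ ε * Δ := by gcongr
    _ < 1 * Δ := by gcongr
    _ ≤ Δ * M := by nlinarith

lemma exists_pruning [Fintype V] {p : V → V} {h : V → ℕ} (hp : Ranked p h) {ε : ℝ}
    (hε0 : 0 < ε) (hε1 : ε < 1) {Δ : ℕ} (hΔ : 0 < Δ)
    (hsmall : ∀ v, p v ≠ v → (desc p v).ncard ≤ Δ) :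
    ∃ S : Set V, IsClean ε Δ (parentGraph (cut p S)) ∧
      (S.ncard : ℝ) ≤ 2 * ε * {v | p v ≠ v}.ncard := by
  have hM : 0 < (2 * Δ).choose Δ := Nat.choose_pos (by omega)
  obtain ⟨code, hcode⟩ := exists_code hp Δ
  choose A B hA hB hdeg hdvd hcost using fun r =>
    exists_selection ε hε0 Δ _ hΔ hM (card_monotone_le Δ) (kids p r).toFinset code
  have hA' : ∀ {r c}, c ∈ A r → c ∈ kids p r := fun hc => Set.mem_toFinset.1 (hA _ hc)
  have hB' : ∀ {r c}, c ∈ B r → c ∈ kids p r := fun hc => Set.mem_toFinset.1 (hB _ hc)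
  -- detach the branches in `A r`, and cut off everything below the tops of those in `B r`
  let SA : Set V := {v | ∃ r, p r = r ∧ v ∈ A r}
  let SB : Set V := {v | ∃ r, p r = r ∧ ∃ c ∈ B r, v ∈ desc p c ∧ v ≠ c}
  let S := SA ∪ SB
  have hroot_ne : ∀ {r c}, p r = r → c ∈ kids p r → p c ≠ c := fun _ hc e =>
    hc.2 (e.symm.trans hc.1)
  have hSB : ∀ {r v}, p r = r → v ∈ kids p r → v ∉ SB := by
    rintro r v hr hv ⟨r', hr', c, hc, hvc, hne⟩
    have h1 := (desc_cases hvc).resolve_left hne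
    rw [hv.1] at h1
    have h2 := eq_of_root_mem_desc hr h1
    exact hroot_ne hr' (hB' hc) (by rw [← h2, hr])
  have hkids : ∀ {r}, p r = r → kids (cut p S) r = ↑((kids p r).toFinset \ A r) := by
    intro r hr
    ext c
    simp only [Finset.coe_sdiff, Set.coe_toFinset, Set.mem_sdiff, Finset.mem_coe]
    constructor
    · rintro ⟨hc, hcr⟩
      have hne : cut p S c ≠ c := by rw [hc]; exact hcr.symm
      refine ⟨⟨(cut_eq_of_ne hne).symm.trans hc, hcr⟩, fun hcA => ?_⟩
      exact (cut_ne.1 hne).1 (Or.inl ⟨r, hr, hcA⟩)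
    · rintro ⟨hc, hcA⟩
      have hcS : c ∉ S := by
        rintro (⟨r', hr', h1⟩ | h1)
        · have : r' = r := (hA' h1).1.symm.trans hc.1
          exact hcA (this ▸ h1)
        · exact hSB hr hc h1
      exact ⟨by rw [cut, if_neg hcS]; exact hc.1, hc.2⟩
  -- unpruned branches are unchanged
  have hkeep : ∀ {r c}, p r = r → c ∈ kids p r → c ∉ A r → c ∉ B r →
      ∀ u ∈ desc p c, u ∉ S := by
    rintro r c hr hc hcA hcB u hu (⟨r', hr', h1⟩ | ⟨r', hr', c', hc', hu', hne⟩)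
    · rcases desc_cases hu with rfl | h2
      · have : r' = r := (hA' h1).1.symm.trans hc.1
        exact hcA (this ▸ h1)
      · rw [(hA' h1).1] at h2
        have h3 := eq_of_root_mem_desc hr' h2
        exact hroot_ne hr hc (h3 ▸ hr')
    · have hk' := hB' hc'
      have : c = c' := kid_unique (by rw [hc.1, hr]) (hroot_ne hr hc) (by rw [hk'.1, hr'])
        (hroot_ne hr' hk') hu hu'
      subst this
      have : r' = r := hk'.1.symm.trans hc.1
      exact hcB (this ▸ hc')
  have hdesc : ∀ {r c}, p r = r → c ∈ kids p r → c ∉ A r → c ∉ B r →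
      desc (cut p S) c = desc p c := by
    intro r c hr hc hcA hcB
    refine (desc_cut_subset p S c).antisymm ?_
    refine desc_induction (motive := fun u => u ∈ desc (cut p S) c) (self_mem_desc _ _) ?_
    intro u hu ih
    refine mem_desc_of_parent ?_
    rwa [cut, if_neg (hkeep hr hc hcA hcB u (mem_desc_of_parent hu))]
  have hpruned : ∀ {r c}, p r = r → c ∈ B r → desc (cut p S) c = {c} := by
    intro r c hr hc
    refine Set.Subset.antisymm ?_ (Set.singleton_subset_iff.2 (self_mem_desc _ _))
    intro u hu
    by_contra hne
    have hus : u ∈ S := Or.inr ⟨r, hr, c, hc, desc_cut_subset p S c hu, hne⟩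
    exact hne (eq_of_root_mem_desc (by rw [cut, if_pos hus]) hu)
  refine ⟨S, isClean_parentGraph (hp.cut S) ?_ ?_ ?_, ?_⟩
  · intro v hv
    exact (Set.ncard_le_ncard (desc_cut_subset p S v)).trans (hsmall v (cut_ne.1 hv).2)
  · intro r _
    by_cases hr : p r = r
    · rw [hkids hr, Set.ncard_coe_finset]
      exact hdeg r
    · left
      refine (Set.ncard_le_ncard fun c hc => ?_).trans (hsmall r hr)
      exact desc_cut_subset p S r (mem_desc_of_parent (by rw [hc.1]; exact self_mem_desc _ _))
  · intro r _ k hk T t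
    by_cases hr : p r = r
    · rw [hkids hr, Set.ncard_coe_finset]
      have hYsub : ∀ {c}, c ∈ (kids p r).toFinset \ A r → HasShape (cut p S) c T t →
          c ∉ B r := by
        rintro c - ⟨φ, -⟩ hcB
        have h1 := Nat.card_congr φ.toEquiv
        rw [hpruned hr hcB] at h1
        simp at h1
        omega
      have hclosed : ∀ {c c'}, c ∈ ((kids p r).toFinset \ A r) \ B r →
          c' ∈ ((kids p r).toFinset \ A r) \ B r → code c = code c' →
          HasShape (cut p S) c T t → HasShape (cut p S) c' T t := by
        intro c c' hc hc' hcc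
        simp only [Finset.mem_sdiff, Set.mem_toFinset] at hc hc'
        obtain ⟨⟨hck, hcA⟩, hcB⟩ := hc
        obtain ⟨⟨hck', hcA'⟩, hcB'⟩ := hc'
        have hr' : cut p S r = r := cut_of_root hr
        have hm : ∀ {c}, c ∈ kids p r → c ∉ A r → c ∈ kids (cut p S) r := fun h1 h2 => by
          rw [hkids hr]; simpa using ⟨h1, h2⟩
        refine HasShape.congr (parent_notMem_desc hr' (hm hck hcA))
          (parent_notMem_desc hr' (hm hck' hcA')) ?_
        obtain ⟨φ, h1, h2, h3⟩ := hcode c c' (hsmall c (hroot_ne hr hck))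
          (hsmall c' (hroot_ne hr hck')) hcc
        refine ⟨φ, ?_, h2, ?_⟩
        · rwa [hdesc hr hck hcA hcB, hdesc hr hck' hcA' hcB']
        · intro u hu huc
          rw [hdesc hr hck hcA hcB] at hu
          rw [cut, cut, if_neg (hkeep hr hck hcA hcB u hu),
            if_neg (hkeep hr hck' hcA' hcB' _ (h1.mapsTo hu)), h3 u hu huc]
      have hY : {c ∈ (((kids p r).toFinset \ A r : Finset V) : Set V) |
            HasShape (cut p S) c T t} =
          ↑({c ∈ ((kids p r).toFinset \ A r) \ B r | HasShape (cut p S) c T t} : Finset V) := by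
        ext c
        simp only [Set.mem_ofPred_eq, Finset.coe_filter, Finset.mem_coe]
        constructor
        · rintro ⟨h1, h2⟩
          exact ⟨Finset.mem_sdiff.2 ⟨h1, hYsub h1 h2⟩, h2⟩
        · rintro ⟨h1, h2⟩
          exact ⟨(Finset.mem_sdiff.1 h1).1, h2⟩
      rw [hY, Set.ncard_coe_finset,
        Finset.card_eq_sum_card_fiberwise (f := code) (t := Finset.univ)
          (s := {c ∈ ((kids p r).toFinset \ A r) \ B r | HasShape (cut p S) c T t})
          (fun _ _ => Finset.mem_coe.2 (Finset.mem_univ _))]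
      refine Finset.dvd_sum fun x _ => ?_
      -- a code class lies entirely inside or entirely outside the shape class of `(T, t)`
      rw [Finset.filter_filter]
      by_cases hx : ∃ c ∈ ((kids p r).toFinset \ A r) \ B r,
          HasShape (cut p S) c T t ∧ code c = x
      · obtain ⟨c, hc, hcT, hcx⟩ := hx
        have hclass : {a ∈ ((kids p r).toFinset \ A r) \ B r |
            HasShape (cut p S) a T t ∧ code a = x} =
            {a ∈ ((kids p r).toFinset \ A r) \ B r | code a = x} :=
          Finset.filter_congr fun c' hc' =>
            ⟨fun h => h.2, fun h => ⟨hclosed hc hc' (hcx.trans h.symm) hcT, h⟩⟩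
        rw [hclass]
        obtain ⟨y, hy⟩ := hdvd r x
        refine ⟨y, ?_⟩
        convert hy
      · rw [Finset.filter_eq_empty_iff.2 fun c hc h => hx ⟨c, hc, h⟩]
        simp
    · have h1 : (kids (cut p S) r).ncard ≤ Δ := by
        refine (Set.ncard_le_ncard fun c hc => ?_).trans (hsmall r hr)
        exact desc_cut_subset p S r (mem_desc_of_parent (by rw [hc.1]; exact self_mem_desc _ _))
      rw [floor_eq_zero_of_small hε0 hε1 h1 hM]
      simp
  · let R : Finset V := {r | p r = r}
    let P : V → Finset V := fun r => A r ∪ (B r).biUnion fun c => (desc p c).toFinset \ {c}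
    have hSP : S ⊆ R.biUnion P := by
      rintro v (⟨r, hr, hv⟩ | ⟨r, hr, c, hc, hv, hne⟩)
      · exact Finset.mem_coe.2 (Finset.mem_biUnion.2 ⟨r, by simpa [R] using hr,
          Finset.mem_union_left _ hv⟩)
      · refine Finset.mem_coe.2 (Finset.mem_biUnion.2 ⟨r, by simpa [R] using hr,
          Finset.mem_union_right _ (Finset.mem_biUnion.2 ⟨c, hc, ?_⟩)⟩)
        simp [hv, hne]
    have hP : ∀ r ∈ R, (P r).card ≤ (A r).card + (B r).card * Δ := by
      intro r hr
      have hr : p r = r := by simpa [R] using hr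
      refine (Finset.card_union_le _ _).trans (Nat.add_le_add_left ?_ _)
      refine Finset.card_biUnion_le_card_mul _ _ _ fun c hc => ?_
      refine (Finset.card_le_card Finset.sdiff_subset).trans ?_
      rw [← Set.ncard_eq_toFinset_card']
      exact hsmall c (hroot_ne hr (hB' hc))
    have hkd : (R : Set V).PairwiseDisjoint fun r => (kids p r).toFinset := by
      intro r _ r' _ hne
      refine Finset.disjoint_left.2 fun c hc hc' => hne ?_
      exact (Set.mem_toFinset.1 hc).1.symm.trans (Set.mem_toFinset.1 hc').1
    have hsum : ∑ r ∈ R, (kids p r).toFinset.card ≤ {v | p v ≠ v}.ncard := by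
      rw [← Finset.card_biUnion hkd, Set.ncard_eq_toFinset_card']
      refine Finset.card_le_card fun c hc => ?_
      obtain ⟨r, hr, hc⟩ := Finset.mem_biUnion.1 hc
      exact Set.mem_toFinset.2 (hroot_ne (by simpa [R] using hr) (Set.mem_toFinset.1 hc))
    have hS1 : S.ncard ≤ ∑ r ∈ R, (P r).card := by
      refine (Set.ncard_le_ncard hSP).trans ?_
      rw [Set.ncard_coe_finset]
      exact Finset.card_biUnion_le
    calc (S.ncard : ℝ) ≤ ∑ r ∈ R, ((P r).card : ℝ) := by exact_mod_cast hS1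
      _ ≤ ∑ r ∈ R, 2 * ε * (kids p r).toFinset.card := by
          refine Finset.sum_le_sum fun r hr => le_trans ?_ (hcost r)
          exact_mod_cast hP r hr
      _ = 2 * ε * ((∑ r ∈ R, (kids p r).toFinset.card : ℕ) : ℝ) := by
          rw [← Finset.mul_sum, Nat.cast_sum]
      _ ≤ 2 * ε * {v | p v ≠ v}.ncard := by gcongr

end CleanSubforest

/-- Let `ε ∈ (0,1)` and let `Δ` be a positive integer with `εΔ ≥ 1`.  Then every forest
`F` has a spanning `(ε,Δ)`-clean subforest `F'` with
`m(F') ≥ (1 − 4(ε + 1/Δ))·m(F)`. -/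
theorem exists_clean_subforest {V : Type*} [Fintype V]
    (ε : ℝ) (hε : ε ∈ Set.Ioo (0 : ℝ) 1) (Δ : ℕ) (hΔpos : 0 < Δ) (hΔ : 1 ≤ ε * Δ)
    (F : SimpleGraph V) (hF : F.IsAcyclic) :
    ∃ F' : SimpleGraph V, F' ≤ F ∧ IsClean ε Δ F' ∧
      (1 - 4 * (ε + 1 / Δ)) * Nat.card F.edgeSet ≤ (Nat.card F'.edgeSet : ℝ) := by
  obtain ⟨p, h, hp, rfl⟩ := exists_parent_function F hF
  obtain ⟨S, hsmall, hS⟩ := exists_small_branches hp Δ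
  obtain ⟨S', hclean, hS'⟩ := exists_pruning (hp.cut S) hε.1 hε.2 hΔpos hsmall
  refine ⟨_, (parentGraph_cut_le _ S').trans (parentGraph_cut_le p S), hclean, ?_⟩
  rw [card_edgeSet_parentGraph hp, card_edgeSet_parentGraph ((hp.cut S).cut S')]
  have h1 := ncard_cut p S
  have h2 := ncard_cut (cut p S) S'
  have h3 : {v | cut p S v ≠ v}.ncard ≤ {v | p v ≠ v}.ncard :=
    Set.ncard_le_ncard fun v hv => (cut_ne.1 hv).2
  generalize {v | cut (cut p S) S' v ≠ v}.ncard = m₂ at *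
  generalize {v | cut p S v ≠ v}.ncard = m₁ at *
  generalize {v | p v ≠ v}.ncard = m at *
  have hΔ' : (0 : ℝ) < Δ := by exact_mod_cast hΔpos
  have hε0 := hε.1
  have g0 : (S.ncard : ℝ) ≤ (1 / Δ) * m := by
    rw [one_div_mul_eq_div, le_div_iff₀ hΔ']
    exact_mod_cast hS.trans h3
  have g1 : (m : ℝ) ≤ m₁ + S.ncard := by exact_mod_cast h1
  have g2 : (m₁ : ℝ) ≤ m₂ + S'.ncard := by exact_mod_cast h2
  have g3 : (m₁ : ℝ) ≤ m := by exact_mod_cast h3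
  have g4 : 2 * ε * m₁ ≤ 2 * ε * (m : ℝ) := by gcongr
  have g5 : 0 ≤ ε * (m : ℝ) := by positivity
  have g6 : 0 ≤ (1 / Δ) * (m : ℝ) := by positivity
  linarith
end

section
/- Let ε ∈ (0,1), let Δ = ⌈1/ε⌉, and let p be the number of isomorphism classes of rooted trees with at most Δ vertices. Let d be an integer with d ≥ (Δ/ε)·C(2Δ,Δ), where C(2Δ,Δ) is the binomial coefficient (2Δ choose Δ). Then the number of isomorphism classes of rooted trees K with root r such that the degree of r in K equals d, every connected component of K − r has at most Δ vertices, and for every rooted tree T with at least 2 vertices the number of components L of K − r that, rooted at the neighbor of r in L, are isomorphic to T as rooted trees is a multiple of ⌊εd/(Δ·C(2Δ,Δ))⌋, is at most (1 + 2Δ·C(2Δ,Δ)/ε)^{p−1}. -/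
namespace CleanComponents

open SimpleGraph

/-! ### Gluing rooted trees at a new root -/

section Glue

variable {p : ℕ} {nT : Fin p → ℕ} (T : ∀ i, SimpleGraph (Fin (nT i))) (rT : ∀ i, Fin (nT i))

/-- The vertices of the tree glued from `n i` copies of `T i`: the root `none`, and
`some ⟨i, j, x⟩` for the vertex `x` of the `j`-th copy of `T i`. -/
abbrev GlueVertex (nT n : Fin p → ℕ) : Type :=
  Option (Σ i, Fin (n i) × Fin (nT i))

/-- Adjacency in the tree glued from `n i` copies of each `T i`. -/
inductive GlueAdj (n : Fin p → ℕ) : GlueVertex nT n → GlueVertex nT n → Prop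
  | left (i : Fin p) (j : Fin (n i)) : GlueAdj n none (some ⟨i, j, rT i⟩)
  | right (i : Fin p) (j : Fin (n i)) : GlueAdj n (some ⟨i, j, rT i⟩) none
  | inner (i : Fin p) (j : Fin (n i)) (x y : Fin (nT i)) (h : (T i).Adj x y) :
      GlueAdj n (some ⟨i, j, x⟩) (some ⟨i, j, y⟩)

/-- The disjoint union of `n i` copies of each `T i`, together with a new vertex `none` joined to
the roots of all the copies. -/
def glueTrees (n : Fin p → ℕ) : SimpleGraph (GlueVertex nT n) where
  Adj := GlueAdj T rT n
  symm := ⟨by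
    rintro _ _ (⟨i, j⟩ | ⟨i, j⟩ | ⟨i, j, x, y, h⟩)
    · exact .right i j
    · exact .left i j
    · exact .inner i j y x h.symm⟩
  loopless := ⟨by
    intro a h
    cases h with
    | inner i j x y h => exact (T i).loopless.irrefl _ h⟩

end Glue

/-! ### Components left by deleting the root -/

section Components

variable {V : Type*} {G : SimpleGraph V} {r : V}

/-- The component `c` of `G` induced on `S`, rooted at a neighbor of `r`, is isomorphic to the
rooted tree `(T, t)`. This is the property counted by `rootedCount`. -/
def IsCopy (G : SimpleGraph V) (r : V) (S : Set V) {k : ℕ} (T : SimpleGraph (Fin k)) (t : Fin k)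
    (c : (G.induce S).ConnectedComponent) : Prop :=
  ∃ (u : S) (hu : u ∈ c.supp) (φ : (G.induce S).induce c.supp ≃g T),
    G.Adj r ↑u ∧ φ ⟨u, hu⟩ = t

/-- The vertex preceding the first visit to `r` on a walk from `v` to `r` is a neighbor of `r`
reachable from `v` in `G − r`. -/
lemma exists_adj_reachable {v : V} (w : G.Walk v r) (hv : v ≠ r) :
    ∃ u : {v : V | v ≠ r}, G.Adj r u ∧ (G.induce {v : V | v ≠ r}).Reachable ⟨v, hv⟩ u := by
  induction w with
  | nil => exact absurd rfl hv
  | @cons a b r h w ih =>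
    by_cases hb : b = r
    · subst hb
      exact ⟨⟨a, hv⟩, h.symm, Reachable.refl _⟩
    · obtain ⟨u, hu, hr⟩ := ih hb
      refine ⟨u, hu, Reachable.trans (Adj.reachable ?_) hr⟩
      exact h

lemma exists_adj_mem (hG : G.Connected) (c : (G.induce {v : V | v ≠ r}).ConnectedComponent) :
    ∃ u : {v : V | v ≠ r}, G.Adj r u ∧ u ∈ c.supp := by
  induction c using ConnectedComponent.ind with
  | h v =>
    obtain ⟨w⟩ := hG.preconnected v r
    obtain ⟨u, hu, hr⟩ := exists_adj_reachable w v.2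
    exact ⟨u, hu, ConnectedComponent.sound hr.symm⟩

/-- In an acyclic graph, a component of `G − r` contains at most one neighbor of `r`. -/
lemma adj_unique (hG : G.IsAcyclic) {c : (G.induce {v : V | v ≠ r}).ConnectedComponent}
    {u u' : {v : V | v ≠ r}} (hu : G.Adj r u) (hu' : G.Adj r u') (hc : u ∈ c.supp)
    (hc' : u' ∈ c.supp) : u = u' := by
  classical
  obtain ⟨w⟩ := c.reachable_of_mem_supp hc hc'
  have hw : r ∉ (w.toPath.1.map (Embedding.induce {v : V | v ≠ r}).toHom).support := by
    rw [Walk.support_map]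
    simp
  -- Compare the edge `r u'` with the path that goes from `r` to `u` and then to `u'` in `G − r`.
  have hp : (w.toPath.1.map (Embedding.induce {v : V | v ≠ r}).toHom).IsPath :=
    w.toPath.2.map Subtype.val_injective
  have h := (hG.subsingleton_path _ _).elim ⟨Walk.cons hu _, hp.cons hw⟩ (Path.singleton hu')
  have h2 := congrArg (fun q : G.Path r u' => q.1.length) h
  have h3 : (w.toPath.1.map (Embedding.induce {v : V | v ≠ r}).toHom).length + 1 = 0 + 1 := h2
  rw [Walk.length_map] at h3
  exact Walk.eq_of_length_eq_zero (p := w.toPath.1) (by omega)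

/-- By uniqueness and existence, each component of `G − r` corresponds to one neighbor of `r`. -/
lemma card_components (hG : G.IsTree) :
    Nat.card (G.induce {v : V | v ≠ r}).ConnectedComponent = Nat.card (G.neighborSet r) := by
  symm
  refine Nat.card_eq_of_bijective
    (fun u => (G.induce {v : V | v ≠ r}).connectedComponentMk ⟨u.1, fun h => G.ne_of_adj u.2 h.symm⟩)
    ⟨?_, ?_⟩
  · intro u u' h
    have := adj_unique hG.isAcyclic (u := ⟨u.1, fun h => G.ne_of_adj u.2 h.symm⟩)
      (u' := ⟨u'.1, fun h => G.ne_of_adj u'.2 h.symm⟩) u.2 u'.2 h rfl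
    exact Subtype.ext (by simpa using this)
  · intro c
    obtain ⟨u, hu, hc⟩ := exists_adj_mem hG.connected c
    exact ⟨⟨u, hu⟩, hc⟩

end Components

/-! ### Recovering a tree from its component counts -/

section Decompose

variable {p : ℕ} {nT : Fin p → ℕ} {T : ∀ i, SimpleGraph (Fin (nT i))} {rT : ∀ i, Fin (nT i)}
  {m : ℕ} {K : SimpleGraph (Fin m)} {r : Fin m}

/-- Every component of `K − r` is a copy of one of the trees of a list that is complete up to the
order `Δ`. -/
lemma exists_isCopy {Δ : ℕ}
    (hTcomplete : ∀ (k : ℕ), k ≤ Δ → ∀ (G : SimpleGraph (Fin k)) (g : Fin k),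
      G.IsTree → ∃ i, ∃ φ : G ≃g T i, φ g = rT i) (hK : K.IsTree)
    (c : (K.induce {v : Fin m | v ≠ r}).ConnectedComponent) (hc : Nat.card c.supp ≤ Δ) :
    ∃ i, IsCopy K r {v : Fin m | v ≠ r} (T i) (rT i) c := by
  classical
  have := Fintype.ofFinite c.supp
  obtain ⟨u, hu, huc⟩ := exists_adj_mem hK.connected c
  have htree : ((K.induce {v : Fin m | v ≠ r}).induce c.supp).IsTree :=
    (hK.isAcyclic.induce _).isTree_connectedComponent c
  rw [Nat.card_eq_fintype_card] at hc
  let e := ((K.induce {v : Fin m | v ≠ r}).induce c.supp).overFinIso rfl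
  obtain ⟨i, φ, hφ⟩ := hTcomplete _ hc _ (e ⟨u, huc⟩) (e.isTree_iff.1 htree)
  exact ⟨i, u, huc, e.trans φ, hu, hφ⟩

/-- The components of `K − r`, listed by their isomorphism types. -/
lemma exists_equiv_components
    (hTnoniso : ∀ i j, i ≠ j → ¬∃ φ : T i ≃g T j, φ (rT i) = rT j) (hK : K.IsAcyclic)
    (hcopy : ∀ c, ∃ i, IsCopy K r {v : Fin m | v ≠ r} (T i) (rT i) c) :
    ∃ c : (Σ i, Fin (rootedCount K r {v : Fin m | v ≠ r} (T i) (rT i))) ≃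
        (K.induce {v : Fin m | v ≠ r}).ConnectedComponent,
      ∀ x, IsCopy K r {v : Fin m | v ≠ r} (T x.1) (rT x.1) (c x) := by
  classical
  let e : ∀ i, Fin (rootedCount K r {v : Fin m | v ≠ r} (T i) (rT i)) ≃
      {c // IsCopy K r {v : Fin m | v ≠ r} (T i) (rT i) c} := fun i => (Finite.equivFin _).symm
  refine ⟨Equiv.ofBijective (fun x => (e x.1 x.2).1) ⟨?_, ?_⟩, fun x => (e x.1 x.2).2⟩
  · rintro ⟨i, j⟩ ⟨i', j'⟩ h
    simp only at h
    obtain ⟨u, hu, φ, hr, hφ⟩ := (e i j).2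
    obtain ⟨u', hu', φ', hr', hφ'⟩ := (e i' j').2
    have hii : i = i' := by
      by_contra hne
      generalize (e i j).1 = c at *
      generalize (e i' j').1 = c' at *
      subst h
      obtain rfl := adj_unique hK hr hr' hu hu'
      refine hTnoniso i i' hne ⟨φ.symm.trans φ', ?_⟩
      rw [← hφ, ← hφ']
      exact congrArg φ' (φ.symm_apply_apply _)
    subst hii
    have := (e i).injective (Subtype.ext h)
    rw [this]
  · intro c
    obtain ⟨i, hi⟩ := hcopy c
    exact ⟨⟨i, (e i).symm ⟨c, hi⟩⟩, by simp⟩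

lemma sum_rootedCount
    (hTnoniso : ∀ i j, i ≠ j → ¬∃ φ : T i ≃g T j, φ (rT i) = rT j) (hK : K.IsTree)
    (hcopy : ∀ c, ∃ i, IsCopy K r {v : Fin m | v ≠ r} (T i) (rT i) c) :
    ∑ i, rootedCount K r {v : Fin m | v ≠ r} (T i) (rT i) = Nat.card (K.neighborSet r) := by
  obtain ⟨c, -⟩ := exists_equiv_components hTnoniso hK.isAcyclic hcopy
  rw [← card_components hK, ← Nat.card_congr c]
  simp

/-- If deleting the root `r` of the tree `K` leaves `n i` copies of each `T i`, then `(K, r)` is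
isomorphic to the rooted tree glued from these copies. -/
lemma exists_iso_glueTrees
    (hK : K.IsTree) {n : Fin p → ℕ}
    (c : (Σ i, Fin (n i)) ≃ (K.induce {v : Fin m | v ≠ r}).ConnectedComponent)
    (hc : ∀ x, IsCopy K r {v : Fin m | v ≠ r} (T x.1) (rT x.1) (c x)) :
    ∃ φ : K ≃g glueTrees T rT n,
      φ r = none := by
  choose u hu ψ hr hψ using hc
  have hr0 : ∀ v : {v : Fin m | v ≠ r}, (v : Fin m) ≠ r := fun v => v.2
  let g : GlueVertex nT n → Fin m :=
    fun a => a.elim r (fun x => ((ψ ⟨x.1, x.2.1⟩).symm x.2.2).1.1)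
  have hg : ∀ i j x, g (some ⟨i, j, x⟩) = ((ψ ⟨i, j⟩).symm x).1.1 := fun _ _ _ => rfl
  -- Two vertices of copies that lie in the same component belong to the same copy.
  have hsame : ∀ (s s' : Σ i, Fin (n i))
      (x : Fin (nT s.1)) (y : Fin (nT s'.1)),
      (K.induce {v : Fin m | v ≠ r}).Reachable ((ψ s).symm x).1 ((ψ s').symm y).1 → s = s' := by
    intro s s' x y h
    apply c.injective
    have h1 : _ = c s := ((ψ s).symm x).2
    have h2 : _ = c s' := ((ψ s').symm y).2
    rw [← h1, ← h2]
    exact ConnectedComponent.sound h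
  have hroot : ∀ i j x, K.Adj r ((ψ ⟨i, j⟩).symm x).1.1 ↔ x = rT i := by
    intro i j x
    constructor
    · intro h
      have h1 := adj_unique hK.isAcyclic h (hr ⟨i, j⟩) ((ψ ⟨i, j⟩).symm x).2 (hu ⟨i, j⟩)
      have h2 : (ψ ⟨i, j⟩).symm x = ⟨u ⟨i, j⟩, hu ⟨i, j⟩⟩ := Subtype.ext h1
      exact ((ψ ⟨i, j⟩).apply_symm_apply x).symm.trans ((congrArg _ h2).trans (hψ ⟨i, j⟩))
    · rintro rfl
      have h : (ψ ⟨i, j⟩).symm (rT i) = ⟨u ⟨i, j⟩, hu ⟨i, j⟩⟩ :=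
        (congrArg _ (hψ ⟨i, j⟩)).symm.trans ((ψ ⟨i, j⟩).symm_apply_apply _)
      rw [h]
      exact hr ⟨i, j⟩
  have hbij : Function.Bijective g := by
    constructor
    · rintro (_ | ⟨i, j, x⟩) (_ | ⟨i', j', y⟩) h
      · rfl
      · exact absurd h.symm (hr0 _)
      · exact absurd h (hr0 _)
      · rw [hg, hg] at h
        have h1 : ((ψ ⟨i, j⟩).symm x).1 = ((ψ ⟨i', j'⟩).symm y).1 := Subtype.ext h
        have h2 := hsame ⟨i, j⟩ ⟨i', j'⟩ x y (h1 ▸ Reachable.refl _)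
        cases h2
        have := (ψ ⟨i, j⟩).symm.injective (Subtype.ext h1)
        rw [this]
    · intro v
      by_cases hv : v = r
      · exact ⟨none, hv.symm⟩
      · obtain ⟨⟨i, j⟩, hij⟩ :=
          c.surjective ((K.induce {v : Fin m | v ≠ r}).connectedComponentMk ⟨v, hv⟩)
        refine ⟨some ⟨i, j, ψ ⟨i, j⟩ ⟨⟨v, hv⟩, hij.symm⟩⟩, ?_⟩
        exact congrArg (fun w => w.1.1) ((ψ ⟨i, j⟩).symm_apply_apply ⟨⟨v, hv⟩, hij.symm⟩)
  have hadj : ∀ a b, K.Adj (g a) (g b) ↔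
      (glueTrees T rT n).Adj a b := by
    intro a b
    constructor
    · intro h
      rcases a with _ | ⟨i, j, x⟩ <;> rcases b with _ | ⟨i', j', y⟩
      · exact absurd h (K.loopless.irrefl _)
      · obtain rfl := (hroot i' j' y).1 h
        exact .left i' j'
      · obtain rfl := (hroot i j x).1 h.symm
        exact .right i j
      · rw [hg, hg] at h
        have h1 : (K.induce {v : Fin m | v ≠ r}).Adj
          ((ψ ⟨i, j⟩).symm x).1 ((ψ ⟨i', j'⟩).symm y).1 := h
        have h2 := hsame ⟨i, j⟩ ⟨i', j'⟩ x y h1.reachable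
        cases h2
        exact .inner i j x y ((ψ ⟨i, j⟩).symm.map_adj_iff.1 h1)
    · rintro (⟨i, j⟩ | ⟨i, j⟩ | ⟨i, j, x, y, h⟩)
      · exact (hroot i j _).2 rfl
      · exact ((hroot i j _).2 rfl).symm
      · exact (ψ ⟨i, j⟩).symm.map_adj_iff.2 h
  let e : glueTrees T rT n ≃g K :=
    { Equiv.ofBijective g hbij with map_rel_iff' := fun {a b} => hadj a b }
  refine ⟨e.symm, ?_⟩
  exact e.symm_apply_apply none

end Decompose

/-! ### Trees with one vertex, and the numerical bound -/

lemma exists_iso_of_order_one {a b : ℕ} (ha : a = 1) (hb : b = 1) (G : SimpleGraph (Fin a))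
    (H : SimpleGraph (Fin b)) (x : Fin a) (y : Fin b) : ∃ φ : G ≃g H, φ x = y := by
  subst ha hb
  refine ⟨⟨Equiv.refl _, ?_⟩, Subsingleton.elim _ _⟩
  intro u v
  obtain rfl := Subsingleton.elim u v
  simp

/-- The constant in the bound: rounding `x = εd/(ΔC) ≥ 1` down loses at most a factor `2`. -/
lemma div_floor_le {ε : ℝ} (hε : 0 < ε) {Δ C d : ℕ} (hΔ : 0 < Δ) (hC : 0 < C)
    (hd : (Δ : ℝ) / ε * C ≤ d) :
    ((d / ⌊ε * d / (Δ * C)⌋₊ : ℕ) : ℝ) ≤ 2 * Δ * C / ε := by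
  have hΔ' : (0 : ℝ) < Δ := by exact_mod_cast hΔ
  have hC' : (0 : ℝ) < C := by exact_mod_cast hC
  have hx : 1 ≤ ε * d / (Δ * C) := by
    rw [le_div_iff₀ (by positivity)]
    rw [div_mul_eq_mul_div, div_le_iff₀ hε] at hd
    linarith
  have hM1 : 1 ≤ ⌊ε * d / (Δ * C)⌋₊ := Nat.le_floor (by simpa using hx)
  have hM2 := Nat.lt_floor_add_one (ε * d / (Δ * C))
  have hM1' : (1 : ℝ) ≤ (⌊ε * d / (Δ * C)⌋₊ : ℝ) := by exact_mod_cast hM1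
  generalize ⌊ε * d / (Δ * C)⌋₊ = M at *
  refine Nat.cast_div_le.trans ?_
  rw [div_le_div_iff₀ (by linarith) hε]
  rw [div_lt_iff₀ (by positivity)] at hM2
  have : (M + 1) * ((Δ : ℝ) * C) ≤ (2 * M) * (Δ * C) := by gcongr; linarith
  linarith

end CleanComponents

/-! ### Counting -/

open CleanComponents in
/-- Let `ε ∈ (0,1)`, `Δ = ⌈1/ε⌉` and let `p` be the number of isomorphism classes of
rooted trees with at most `Δ` vertices (given by a complete irredundant list
`(T i, rT i)`).  Let `d ≥ (Δ/ε)·C(2Δ,Δ)`.  Then the number of isomorphism classes of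
rooted trees `K` with root `r` of degree `d` such that every component of `K − r` has
at most `Δ` vertices and, for every rooted tree `T'` with at least two vertices, the
number of components of `K − r`, rooted in the neighbor of `r`, isomorphic to `T'` as
rooted trees is a multiple of `⌊εd/(Δ·C(2Δ,Δ))⌋`, is at most
`(1 + 2Δ·C(2Δ,Δ)/ε)^(p−1)`:  there is a list of at most that many rooted trees
containing a representative of every such class. -/
theorem count_clean_components (ε : ℝ) (hε : ε ∈ Set.Ioo (0 : ℝ) 1)
    (Δ : ℕ) (hΔdef : Δ = ⌈1 / ε⌉₊)
    (p : ℕ) (nT : Fin p → ℕ) (T : ∀ i, SimpleGraph (Fin (nT i)))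
    (rT : ∀ i, Fin (nT i))
    (hTtree : ∀ i, (T i).IsTree) (hTorder : ∀ i, nT i ≤ Δ)
    (hTnoniso : ∀ i j, i ≠ j → ¬∃ φ : T i ≃g T j, φ (rT i) = rT j)
    (hTcomplete : ∀ (k : ℕ), k ≤ Δ → ∀ (G : SimpleGraph (Fin k)) (g : Fin k),
      G.IsTree → ∃ i, ∃ φ : G ≃g T i, φ g = rT i)
    (d : ℕ) (hd : ((Δ : ℝ) / ε) * ((2 * Δ).choose Δ) ≤ d) :
    ∃ (q : ℕ) (nS : Fin q → ℕ) (S : ∀ i, SimpleGraph (Fin (nS i)))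
      (rS : ∀ i, Fin (nS i)),
      (q : ℝ) ≤ (1 + 2 * Δ * ((2 * Δ).choose Δ) / ε) ^ (p - 1) ∧
      ∀ (m : ℕ) (K : SimpleGraph (Fin m)) (r : Fin m), K.IsTree →
        Nat.card (K.neighborSet r) = d →
        (∀ c : (K.induce {v : Fin m | v ≠ r}).ConnectedComponent,
          Nat.card c.supp ≤ Δ) →
        (∀ (k : ℕ), 2 ≤ k → ∀ T' : SimpleGraph (Fin k), T'.IsTree → ∀ t : Fin k,
          ⌊ε * d / (Δ * (2 * Δ).choose Δ)⌋₊ ∣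
            rootedCount K r {v : Fin m | v ≠ r} T' t) →
        ∃ i, ∃ φ : K ≃g S i, φ r = rS i := by
  classical
  have hε0 : 0 < ε := hε.1
  have hΔ : 0 < Δ := by
    rw [hΔdef]
    exact Nat.ceil_pos.2 (by positivity)
  have hC : 0 < (2 * Δ).choose Δ := Nat.choose_pos (by omega)
  set M := ⌊ε * d / (Δ * (2 * Δ).choose Δ)⌋₊ with hM
  have hN : ((d / M : ℕ) : ℝ) ≤ 2 * Δ * ((2 * Δ).choose Δ) / ε := div_floor_le hε0 hΔ hC hd
  obtain ⟨i₀, φ₀, -⟩ := hTcomplete 1 hΔ ⊥ 0 SimpleGraph.IsTree.of_subsingleton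
  have hi₀ : nT i₀ = 1 := by simpa using (Fintype.card_congr φ₀.toEquiv).symm
  have h2 : ∀ i, i ≠ i₀ → 2 ≤ nT i := by
    intro i hi
    by_contra hlt
    have h1 : nT i = 1 := by
      have := (rT i).pos
      omega
    exact hTnoniso i i₀ hi (exists_iso_of_order_one h1 hi₀ _ _ _ _)
  -- A vector `a` prescribes `M * a i` copies of `T i` for `i ≠ i₀`; the copies of the one-vertex
  -- tree `T i₀` make up the rest of the degree `d`.
  let A := {i // i ≠ i₀} → Fin (d / M + 1)
  let cnt : A → Fin p → ℕ := fun a i =>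
    if h : i ≠ i₀ then M * (a ⟨i, h⟩ : ℕ) else d - ∑ j : {i // i ≠ i₀}, M * (a j : ℕ)
  have hcard : Fintype.card A = (d / M + 1) ^ (p - 1) := by
    simp [A, Fintype.card_subtype_compl]
  let e : A ≃ Fin ((d / M + 1) ^ (p - 1)) := Fintype.equivFinOfCardEq hcard
  refine ⟨(d / M + 1) ^ (p - 1), fun s => Fintype.card (GlueVertex nT (cnt (e.symm s))),
    fun s => (glueTrees T rT (cnt (e.symm s))).overFin rfl,
    fun s => (glueTrees T rT (cnt (e.symm s))).overFinIso rfl none, ?_, ?_⟩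
  · push_cast
    rw [add_comm]
    gcongr
  · intro m K r hK hdeg hcomp hdvd
    have hcopy : ∀ c, ∃ i, IsCopy K r {v : Fin m | v ≠ r} (T i) (rT i) c :=
      fun c => exists_isCopy hTcomplete hK c (hcomp c)
    let n : Fin p → ℕ := fun i => rootedCount K r {v : Fin m | v ≠ r} (T i) (rT i)
    have hsum : ∑ i, n i = Nat.card (K.neighborSet r) := sum_rootedCount hTnoniso hK hcopy
    obtain ⟨c, hc⟩ := exists_equiv_components hTnoniso hK.isAcyclic hcopy
    obtain ⟨φ, hφ⟩ : ∃ φ : K ≃g glueTrees T rT n, φ r = none := exists_iso_glueTrees hK c hc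
    rw [hdeg] at hsum
    have hle : ∀ i, n i ≤ d := fun i =>
      hsum ▸ Finset.single_le_sum (fun _ _ => Nat.zero_le _) (Finset.mem_univ i)
    have hdiv : ∀ i, i ≠ i₀ → M ∣ n i := fun i hi => hdvd _ (h2 i hi) (T i) (hTtree i) (rT i)
    let a : A := fun i => ⟨n i / M, Nat.lt_succ_of_le (Nat.div_le_div_right (hle i))⟩
    have hcnt : cnt a = n := by
      funext i
      by_cases hi : i ≠ i₀
      · simp only [cnt, dif_pos hi, a]
        exact Nat.mul_div_cancel' (hdiv i hi)
      · simp only [cnt, dif_neg hi, a]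
        have h3 : ∑ j : {i // i ≠ i₀}, M * (n j / M) = ∑ j : {i // i ≠ i₀}, n j :=
          Finset.sum_congr rfl fun j _ => Nat.mul_div_cancel' (hdiv j j.2)
        rw [h3]
        have h4 := Fintype.sum_eq_add_sum_subtype_ne n i₀
        obtain rfl : i = i₀ := not_not.1 hi
        have h5 : n i + ∑ j : {j // j ≠ i}, n j = d := h4.symm.trans hsum
        omega
    have key : ∀ b : A, cnt b = n →
        ∃ ψ : K ≃g (glueTrees T rT (cnt b)).overFin rfl,
          ψ r = (glueTrees T rT (cnt b)).overFinIso rfl none := by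
      intro b hb
      rw [hb]
      exact ⟨φ.trans ((glueTrees T rT n).overFinIso rfl), congrArg ((glueTrees T rT n).overFinIso rfl) hφ⟩
    exact ⟨e a, key _ (by rw [e.symm_apply_apply, hcnt])⟩
end
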